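/- Let M = (Q, A, τ) be an invertible and reversible Mealy automaton and let G = P_M̃ be the automaton group generated by M. If G is virtually nilpotent (i.e., G has a nilpotent subgroup of finite index), then G is finite. In other words, no infinite virtually nilpotent group is generated by an invertible and reversible Mealy automaton. -/

import Mathlib

/-!
Fix a state `q` of `M`. As `M` is reversible, letters act by permutations on the words
of states of each length (the dual action); let the orbit words be those reached from powers
of `q`. By transitivity on each length, the number of letters extending an orbit word to the left
depends only on its length, and it is eventually a constant `d`; hence there are `d ^ n` extensions
by `n` letters, and orbit words overlapping in a long enough word can be glued
(`exists_stable`, `Stable.card_ext`, `Stable.glue`). All classes of extensions of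
length `n` that are equal in `G` have the same size (`card_class_le`).

A finitely generated virtually nilpotent group has polynomial growth
(`polyGrowth_of_finiteIndex`), so the classes must have nearly `d ^ n` elements. Let `N` be a
nilpotent normal subgroup of finite index, and suppose that an element `Y * q ^ (-|Y|)` of `N`, for a
return word `Y` of the orbit, had infinite order. In a nilpotent group the semigroup generated by
the conjugates of an element of infinite order does not contain `1` (`one_notMem_cone`), so it
defines a bi-invariant order. Replacing an occurrence of `q ^ |Y|` by `Y` increases a word, so the
class of a maximal word avoids `q ^ |Y|` at all return positions; by `Stable.card_avoid` it is
exponentially smaller than `d ^ n`, a contradiction (`Stable.isOfFinOrder_of_ret`).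

So all return words equal powers of `q` up to torsion, and `N` has only finitely many torsion
elements (`finite_torsion`). Hence the orbit represents boundedly many elements of `G` in each
length; the powers of `q` are then states of automata of bounded size, two of them coincide, and `q`
has finite order (`isOfFinOrder_of_bounded`, `isOfFinOrder_state`). This requires `q` to represent an
element of `N`, but it applies to the automata whose states are words of states, and shows that all
positive words have finite order (`isOfFinOrder_ev`). Then every element of `G` is represented
by a positive word, `N` is a torsion group, and therefore finite.
-/

namespace AutGrp

/-- A Mealy automaton with state set `Q` and alphabet `A`:
`step q a = (q · a, q @ a)` (output letter, next state). -/
structure Mealy (Q A : Type*) where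
  step : Q → A → A × Q

namespace Mealy

variable {Q A : Type*}

/-- The output letter `q · a`. -/
def o (M : Mealy Q A) (q : Q) (a : A) : A := (M.step q a).1

/-- The next state `q @ a`. -/
def t (M : Mealy Q A) (q : Q) (a : A) : Q := (M.step q a).2

/-- Action of a single state on a word of letters: `q · w`. -/
def actA (M : Mealy Q A) : Q → List A → List A
  | _, [] => []
  | q, a :: w => M.o q a :: M.actA (M.t q a) w

/-- State reached from `q` after reading the word `w`: `q @ w`. -/
def stA (M : Mealy Q A) : Q → List A → Q
  | q, [] => q
  | q, a :: w => M.stA (M.t q a) w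

/-- Action of a word of states on a word of letters: `s · u` (rightmost state acts first). -/
def actW (M : Mealy Q A) : List Q → List A → List A
  | [], u => u
  | q :: s, u => M.actA q (M.actW s u)

/-- Word of states reached after reading `u`: `s @ u`. -/
def stW (M : Mealy Q A) : List Q → List A → List Q
  | [], _ => []
  | q :: s, u => M.stA q (M.actW s u) :: M.stW s u

/-- `M` is invertible if each state acts on `A` by a bijection. -/
def Invertible (M : Mealy Q A) : Prop := ∀ q : Q, Function.Bijective (M.o q)

/-- `M` is reversible if each letter acts on `Q` by a bijection. -/
def Reversible (M : Mealy Q A) : Prop := ∀ a : A, Function.Bijective (fun q => M.t q a)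

theorem actA_append (M : Mealy Q A) (q : Q) (x y : List A) :
    M.actA q (x ++ y) = M.actA q x ++ M.actA (M.stA q x) y := by
  induction x generalizing q with
  | nil => simp [actA, stA]
  | cons a w ih => simp [actA, stA, ih]

theorem stA_append (M : Mealy Q A) (q : Q) (x y : List A) :
    M.stA q (x ++ y) = M.stA (M.stA q x) y := by
  induction x generalizing q with
  | nil => simp [stA]
  | cons a w ih => simp [stA, ih]

theorem actW_append_states (M : Mealy Q A) (s u : List Q) (w : List A) :
    M.actW (s ++ u) w = M.actW s (M.actW u w) := by
  induction s with
  | nil => simp [actW]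
  | cons q s ih => simp [actW, ih]

theorem actW_append (M : Mealy Q A) (s : List Q) (x y : List A) :
    M.actW s (x ++ y) = M.actW s x ++ M.actW (M.stW s x) y := by
  induction s with
  | nil => simp [actW, stW]
  | cons q s ih => simp [actW, stW, ih, actA_append]

theorem stW_append (M : Mealy Q A) (s : List Q) (x y : List A) :
    M.stW s (x ++ y) = M.stW (M.stW s x) y := by
  induction s with
  | nil => simp [stW]
  | cons q s ih => simp [stW, actW, ih, actW_append, stA_append]

theorem actW_stW_congr (M : Mealy Q A) {p p' : List Q}
    (h : ∀ w : List A, M.actW p w = M.actW p' w) (u w : List A) :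
    M.actW (M.stW p u) w = M.actW (M.stW p' u) w := by
  have h1 := M.actW_append p u w
  have h2 := M.actW_append p' u w
  rw [h u, h (u ++ w)] at h1
  rw [h1] at h2
  exact List.append_cancel_left h2

/-- The congruence `~Q` on the free monoid `Q*`: two words of states are equivalent
iff they act identically on `A*`. -/
def conQ (M : Mealy Q A) : Con (FreeMonoid Q) where
  r s u := ∀ w : List A, M.actW s.toList w = M.actW u.toList w
  iseqv := ⟨fun _ _ => rfl, fun h w => (h w).symm, fun h1 h2 w => (h1 w).trans (h2 w)⟩
  mul' := by
    intro a b c d h1 h2 w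
    simp only [FreeMonoid.toList_mul, actW_append_states]
    rw [h2 w, h1 (M.actW d.toList w)]

/-- The congruence `~A` on the free monoid `A*`: `u ~A v` iff `s @ u = s @ v` for all `s ∈ Q*`. -/
def conA (M : Mealy Q A) : Con (FreeMonoid A) where
  r u v := ∀ s : List Q, M.stW s u.toList = M.stW s v.toList
  iseqv := ⟨fun _ _ => rfl, fun h s => (h s).symm, fun h1 h2 s => (h1 s).trans (h2 s)⟩
  mul' := by
    intro a b c d h1 h2 s
    simp only [FreeMonoid.toList_mul, stW_append]
    rw [h1 s, h2 (M.stW s b.toList)]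

/-- The congruence `~D` on the free monoid `A*`: `u ~D v` iff `s @ u ~Q s @ v` for all `s ∈ Q*`. -/
def conD (M : Mealy Q A) : Con (FreeMonoid A) where
  r u v := ∀ (s : List Q) (w : List A),
    M.actW (M.stW s u.toList) w = M.actW (M.stW s v.toList) w
  iseqv := ⟨fun _ _ _ => rfl, fun h s w => (h s w).symm,
    fun h1 h2 s w => (h1 s w).trans (h2 s w)⟩
  mul' := by
    intro a b c d h1 h2 s w
    simp only [FreeMonoid.toList_mul, stW_append]
    calc M.actW (M.stW (M.stW s a.toList) c.toList) w
        = M.actW (M.stW (M.stW s b.toList) c.toList) w :=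
          M.actW_stW_congr (h1 s) c.toList w
      _ = M.actW (M.stW (M.stW s b.toList) d.toList) w := h2 _ w

/-- The automaton semigroup (monoid) `P_M = Q* / ~Q`. -/
abbrev PM (M : Mealy Q A) : Type _ := M.conQ.Quotient

/-- The dual automaton semigroup (monoid) `D_M = A* / ~A`. -/
abbrev DM (M : Mealy Q A) : Type _ := M.conA.Quotient

/-- The monoid `D'_M = A* / ~D`. -/
abbrev DM' (M : Mealy Q A) : Type _ := M.conD.Quotient

/-- The class in `P_M` of a word of states. -/
def PMmk (M : Mealy Q A) (s : List Q) : M.PM := M.conQ.mk' (FreeMonoid.ofList s)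

/-- The class in `D_M` of a word of letters. -/
def DMmk (M : Mealy Q A) (u : List A) : M.DM := M.conA.mk' (FreeMonoid.ofList u)

/-- The class in `D'_M` of a word of letters. -/
def DM'mk (M : Mealy Q A) (u : List A) : M.DM' := M.conD.mk' (FreeMonoid.ofList u)

/-- `M` is self-invertible if `P_M` is a group. -/
def SelfInvertible (M : Mealy Q A) : Prop :=
  ∀ x : M.PM, ∃ y : M.PM, x * y = 1 ∧ y * x = 1

/-- The enriched automaton of an invertible automaton: states `Q ⊕ Q`, where `Sum.inl q` is `q`
and `Sum.inr q` is the formal inverse `q⁻¹`; `τ̃(q,a) = τ(q,a)` and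
`τ̃(q⁻¹, q·a) = (a, (q@a)⁻¹)`. -/
noncomputable def enriched [Nonempty A] (M : Mealy Q A) : Mealy (Q ⊕ Q) A where
  step := fun p b =>
    match p with
    | Sum.inl q => (M.o q b, Sum.inl (M.t q b))
    | Sum.inr q =>
        (Function.invFun (M.o q) b, Sum.inr (M.t q (Function.invFun (M.o q) b)))

/-- The monoid `Δ_M` presented by generators `Q ⊔ A` and relations `q a = (q·a)(q@a)`. -/
def deltaCon (M : Mealy Q A) : Con (FreeMonoid (Q ⊕ A)) :=
  conGen (fun w₁ w₂ => ∃ (q : Q) (a : A),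
    w₁ = FreeMonoid.of (Sum.inl q) * FreeMonoid.of (Sum.inr a) ∧
    w₂ = FreeMonoid.of (Sum.inr (M.o q a)) * FreeMonoid.of (Sum.inl (M.t q a)))

end Mealy

/-- Evaluation of a positive word in the letters `y` (for `true`) and `z` (for `false`). -/
def evalPair {S : Type*} [Monoid S] (y z : S) : List Bool → S
  | [] => 1
  | b :: l => (bif b then y else z) * evalPair y z l

/-- `y` and `z` freely generate a free subsemigroup of rank two: distinct nonempty
positive words in `y, z` represent distinct elements. -/
def IsFreePair {S : Type*} [Monoid S] (y z : S) : Prop :=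
  ∀ l₁ l₂ : List Bool, l₁ ≠ [] → l₂ ≠ [] →
    evalPair y z l₁ = evalPair y z l₂ → l₁ = l₂

/-- `x` has infinite order: `{x, x², x³, …}` is infinite. -/
def InfiniteOrder {S : Type*} [Monoid S] (x : S) : Prop :=
  (Set.range fun n : ℕ => x ^ (n + 1)).Infinite

/-- The length-`n` prefix of a sequence. -/
def seqTake {A : Type*} (ξ : ℕ → A) (n : ℕ) : List A := (List.range n).map ξ

/-- The `n`-th power `u^n` of a finite word. -/
def wpow {A : Type*} (u : List A) : ℕ → List A
  | 0 => []
  | n + 1 => u ++ wpow u n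

/-- The eventually periodic sequence `u v v v ⋯`. -/
noncomputable def prePeriodic {A : Type*} [Nonempty A] (u v : List A) : ℕ → A :=
  fun n => if n < u.length then u.getD n (Classical.arbitrary A)
    else v.getD ((n - u.length) % v.length) (Classical.arbitrary A)

/-- The periodic sequence `u^ω = u u u ⋯`. -/
noncomputable def periodic {A : Type*} [Nonempty A] (u : List A) : ℕ → A :=
  prePeriodic [] u

namespace Mealy

/-- The action of a word of states on a sequence: `s · ξ` is the sequence whose
length-`n` prefix is `s · (length-`n` prefix of `ξ`)`. -/
noncomputable def actSeq {Q A : Type*} [Nonempty A] (M : Mealy Q A)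
    (s : List Q) (ξ : ℕ → A) : ℕ → A :=
  fun n => (M.actW s (seqTake ξ (n + 1))).getD n (Classical.arbitrary A)

/-- The language of all prefixes of the orbit of `a^ω` under `P_M`. -/
def Lan {Q A : Type*} (M : Mealy Q A) (a : A) : Set (List A) :=
  {v | ∃ (k : ℕ) (s : List Q), v = M.actW s (List.replicate k a)}

/-- The degree of `v` in `Lan(a)`: the number of letters `b` with `v b ∈ Lan(a)`. -/
noncomputable def deg {Q A : Type*} (M : Mealy Q A) (a : A) (v : List A) : ℕ :=
  {b : A | v ++ [b] ∈ M.Lan a}.ncard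

end Mealy

/-- A language is regular if it is recognized by a deterministic finite automaton. -/
def IsRegular {A : Type*} (L : Set (List A)) : Prop :=
  ∃ (σ : Type) (_ : Fintype σ) (dfa : DFA A σ), ∀ w : List A, w ∈ dfa.accepts ↔ w ∈ L


/-! ### Nilpotent groups -/

section GroupTheory

open Subgroup
open scoped commutatorElement

variable {G : Type*} [Group G]

theorem commute_mk_of_commutator_mem {K : Subgroup G} [K.Normal] {a b : G} (h : ⁅a, b⁆ ∈ K) :
    Commute (a : G ⧸ K) (b : G ⧸ K) := by
  have h1 : ((⁅a, b⁆ : G) : G ⧸ K) = 1 := (QuotientGroup.eq_one_iff _).2 h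
  have h2 : ⁅(a : G ⧸ K), (b : G ⧸ K)⁆ = 1 := h1
  exact commutatorElement_eq_one_iff_commute.1 h2

/-- If `N` is central modulo `K` and has generators of exponent `k` modulo `K`, then all of `N`
has exponent `k` modulo `K`. -/
theorem pow_mem_of_central {N K : Subgroup G} [K.Normal] (hc : ∀ n ∈ N, ∀ x, ⁅n, x⁆ ∈ K)
    {S : Set G} (hS : N = closure S) {k : ℕ} (h : ∀ s ∈ S, s ^ k ∈ K) :
    ∀ n ∈ N, n ^ k ∈ K := by
  subst hS
  intro n hn
  rw [← QuotientGroup.eq_one_iff]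
  induction hn using closure_induction with
  | mem x hx => exact (QuotientGroup.eq_one_iff _).2 (h x hx)
  | one => simp
  | mul x y hx hy ihx ihy =>
    have := commute_mk_of_commutator_mem (hc x hx y)
    rw [QuotientGroup.mk_pow] at *
    rw [QuotientGroup.mk_mul, this.mul_pow, ihx, ihy, one_mul]
  | inv x hx ihx =>
    rw [inv_pow, QuotientGroup.mk_inv, ihx, inv_one]

/-- The descending series `N, [N, G], [[N, G], G], …` starting from the normal closure of `g`. -/
def descend (g : G) : ℕ → Subgroup G
  | 0 => normalClosure {g}
  | i + 1 => ⁅descend g i, (⊤ : Subgroup G)⁆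

instance descend_normal (g : G) : ∀ i, (descend g i).Normal
  | 0 => by unfold descend; infer_instance
  | i + 1 => by
    have := descend_normal g i
    unfold descend; infer_instance

theorem commutator_mem_descend (g : G) (i : ℕ) {n : G} (hn : n ∈ descend g i) (x : G) :
    ⁅n, x⁆ ∈ descend g (i + 1) :=
  commutator_mem_commutator hn (mem_top x)

/-- If `⁅n, x⁆` commutes with `n` and `x` modulo `K`, then `⁅n, x⁆ ^ k` equals `⁅n ^ k, x⁆`
modulo `K`. -/
theorem commutator_pow_mem {K : Subgroup G} [K.Normal] {n x : G} (k : ℕ)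
    (h1 : ⁅⁅n, x⁆, n⁆ ∈ K) (h2 : ⁅⁅n, x⁆, x⁆ ∈ K) (h3 : ⁅n ^ k, x⁆ ∈ K) : ⁅n, x⁆ ^ k ∈ K := by
  have c1 := commute_mk_of_commutator_mem h1
  have c2 := commute_mk_of_commutator_mem h2
  have c3 := (commute_mk_of_commutator_mem h3).eq
  rw [← QuotientGroup.eq_one_iff, QuotientGroup.mk_pow]
  rw [QuotientGroup.mk_pow] at c3
  have e : ((⁅n, x⁆ : G) : G ⧸ K) = n * x * (n : G ⧸ K)⁻¹ * (x : G ⧸ K)⁻¹ := rfl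
  generalize ((⁅n, x⁆ : G) : G ⧸ K) = c at *
  generalize (n : G ⧸ K) = n at *
  generalize (x : G ⧸ K) = x at *
  have e' : n * x = c * x * n := by rw [e]; group
  have key : ∀ j : ℕ, n ^ j * x = c ^ j * x * n ^ j := by
    intro j
    induction j with
    | zero => simp
    | succ j ih =>
      calc n ^ (j + 1) * x = n * (n ^ j * x) := by rw [pow_succ', mul_assoc]
        _ = (n * c ^ j) * x * n ^ j := by rw [ih]; simp only [mul_assoc]
        _ = c ^ j * (n * x) * n ^ j := by rw [(c1.pow_left j).eq.symm]; simp only [mul_assoc]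
        _ = c ^ (j + 1) * x * n ^ (j + 1) := by rw [e', pow_succ, pow_succ']; simp only [mul_assoc]
  have h := key k
  rw [c3, mul_assoc] at h
  exact (mul_eq_right.1 h.symm)

/-- If `g ^ k` is trivial in the first factor of the series, then every factor is killed by `k`,
since it is central and generated by commutators of elements of the previous one. -/
theorem pow_mem_descend {g : G} {k : ℕ} (h : g ^ k ∈ descend g 1) (i : ℕ) :
    ∀ n ∈ descend g i, n ^ k ∈ descend g (i + 1) := by
  induction i with
  | zero =>
    refine pow_mem_of_central (fun n hn x => commutator_mem_descend g 0 hn x)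
      (S := Group.conjugatesOfSet {g}) rfl ?_
    intro s hs
    obtain ⟨a, ha, hc⟩ := Group.mem_conjugatesOfSet_iff.1 hs
    rw [Set.mem_singleton_iff] at ha
    subst ha
    obtain ⟨c, rfl⟩ := isConj_iff.1 hc
    rw [conj_pow]
    exact (descend_normal a 1).conj_mem _ h c
  | succ i ih =>
    refine pow_mem_of_central (fun n hn x => commutator_mem_descend g (i + 1) hn x)
      (S := {c | ∃ n ∈ descend g i, ∃ x ∈ (⊤ : Subgroup G), ⁅n, x⁆ = c}) (commutator_def _ _) ?_
    rintro _ ⟨n, hn, x, -, rfl⟩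
    have hnx := commutator_mem_descend g i hn x
    exact commutator_pow_mem k (commutator_mem_descend g _ hnx _)
      (commutator_mem_descend g _ hnx _) (commutator_mem_descend g _ (ih n hn) _)

theorem descend_le_lowerCentralSeries (g : G) (i : ℕ) :
    descend g i ≤ (⊤ : Subgroup G).lowerCentralSeries i := by
  induction i with
  | zero => exact le_top
  | succ i ih => exact commutator_mono ih le_rfl

/-- In a nilpotent group, if some positive power of `g` lies in `[N, G]`, where `N` is the normal
closure of `g`, then `N` is a torsion group: the factors of the series `descend g` inherit the
exponent of the first one. -/
theorem normalClosure_torsion [Group.IsNilpotent G] {g : G} {k : ℕ} (hk : 0 < k)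
    (h : g ^ k ∈ descend g 1) : ∀ n ∈ normalClosure {g}, IsOfFinOrder n := by
  obtain ⟨c, hc⟩ := Subgroup.nilpotent_iff_lowerCentralSeries.1 ‹Group.IsNilpotent G›
  intro n hn
  have key : ∀ i, n ^ k ^ i ∈ descend g i := by
    intro i
    induction i with
    | zero => simpa [descend] using hn
    | succ i ih =>
      rw [pow_succ, pow_mul]
      exact pow_mem_descend h i _ ih
  have h1 := descend_le_lowerCentralSeries g c (key c)
  rw [hc, mem_bot] at h1
  exact isOfFinOrder_iff_pow_eq_one.2 ⟨_, pow_pos hk c, h1⟩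

theorem isOfFinOrder_mul_of_nilpotent [Group.IsNilpotent G] {a b : G} (ha : IsOfFinOrder a)
    (hb : IsOfFinOrder b) : IsOfFinOrder (a * b) := by
  obtain ⟨k, hk, hak⟩ := isOfFinOrder_iff_pow_eq_one.1 ha
  obtain ⟨m, hm, hbm⟩ := isOfFinOrder_iff_pow_eq_one.1 hb
  have h1 : (a * b) ^ m ∈ normalClosure {a} := by
    rw [← QuotientGroup.eq_one_iff]
    have : (a : G ⧸ normalClosure {a}) = 1 :=
      (QuotientGroup.eq_one_iff _).2 (subset_normalClosure rfl)
    rw [QuotientGroup.mk_pow, QuotientGroup.mk_mul, this, one_mul, ← QuotientGroup.mk_pow, hbm,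
      QuotientGroup.mk_one]
  have h2 := normalClosure_torsion hk (by rw [hak]; exact one_mem _) _ h1
  exact (isOfFinOrder_pow.1 h2).resolve_right hm.ne'

/-- The torsion elements of a nilpotent group form a subgroup. -/
def torsionSubgroup (G : Type*) [Group G] [Group.IsNilpotent G] : Subgroup G where
  carrier := {g | IsOfFinOrder g}
  mul_mem' := isOfFinOrder_mul_of_nilpotent
  one_mem' := IsOfFinOrder.one
  inv_mem' := fun h => h.inv

/-- The semigroup of products of conjugates of `g`: the positive elements of the smallest
bi-invariant transitive relation on `G` for which `g` is positive. -/
def cone (g : G) : Subsemigroup G := Subsemigroup.closure {x | ∃ c, c * g * c⁻¹ = x}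

/-- In a nilpotent group the cone of an element of infinite order does not contain `1`, so it
defines a strict bi-invariant partial order. -/
theorem one_notMem_cone [Group.IsNilpotent G] {g : G} (hg : ¬ IsOfFinOrder g) :
    (1 : G) ∉ cone g := by
  intro h1
  have key : ∀ z ∈ cone g, ∃ k : ℕ, 0 < k ∧ (z : G ⧸ descend g 1) = (g : G ⧸ descend g 1) ^ k := by
    intro z hz
    induction hz using Subsemigroup.closure_induction with
    | mem x hx =>
      obtain ⟨c, rfl⟩ := hx
      refine ⟨1, one_pos, ?_⟩
      have : Commute (g : G ⧸ descend g 1) c := commute_mk_of_commutator_mem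
        (commutator_mem_descend g 0 (subset_normalClosure rfl) c)
      rw [QuotientGroup.mk_mul, QuotientGroup.mk_mul, QuotientGroup.mk_inv, this.eq.symm,
        mul_inv_cancel_right, pow_one]
    | mul x y _ _ hx hy =>
      obtain ⟨k, hk, ex⟩ := hx
      obtain ⟨m, hm, ey⟩ := hy
      exact ⟨k + m, by omega, by rw [QuotientGroup.mk_mul, ex, ey, pow_add]⟩
  obtain ⟨k, hk, e⟩ := key 1 h1
  have h2 : g ^ k ∈ descend g 1 := by
    rw [← QuotientGroup.eq_one_iff, QuotientGroup.mk_pow, ← e, QuotientGroup.mk_one]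
  exact hg (normalClosure_torsion hk h2 g (subset_normalClosure rfl))

/-- Subgroups obtained from the trivial one by finitely many cyclic extensions. -/
inductive IsPolycyclic : Subgroup G → Prop
  | bot : IsPolycyclic ⊥
  | step (N : Subgroup G) (s : G) (hN : IsPolycyclic N) (hs : s ∈ normalizer (N : Set G)) :
      IsPolycyclic (N ⊔ zpowers s)

theorem mem_sup_zpowers {N : Subgroup G} {s : G} (hs : s ∈ normalizer (N : Set G)) {x : G} :
    x ∈ N ⊔ zpowers s ↔ ∃ n ∈ N, ∃ k : ℤ, x = n * s ^ k := by
  have h := coe_mul_of_right_le_normalizer_left N (zpowers s) (by simpa using hs)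
  rw [← SetLike.mem_coe, h, Set.mem_mul]
  constructor
  · rintro ⟨n, hn, y, ⟨k, rfl⟩, rfl⟩
    exact ⟨n, hn, k, rfl⟩
  · rintro ⟨n, hn, k, rfl⟩
    exact ⟨n, hn, _, ⟨k, rfl⟩, rfl⟩

/-- Adjoining finitely many elements that are central modulo `N` keeps `N` polycyclic. -/
theorem IsPolycyclic.sup_closure {N : Subgroup G} (hN : IsPolycyclic N) (F : Finset G)
    (hF : ∀ f ∈ F, ∀ x, ⁅f, x⁆ ∈ N) : IsPolycyclic (N ⊔ closure (F : Set G)) := by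
  classical
  induction F using Finset.induction_on with
  | empty => simpa using hN
  | insert a F _ ih =>
    have h1 := ih fun f hf => hF f (Finset.mem_insert_of_mem hf)
    have h2 : a ∈ normalizer ((N ⊔ closure (F : Set G) : Subgroup G) : Set G) := by
      rw [mem_normalizer_iff]
      intro h
      have hc : ⁅a, h⁆ ∈ N ⊔ closure (F : Set G) :=
        (le_sup_left : N ≤ _) (hF a (Finset.mem_insert_self _ _) h)
      have e : a * h * a⁻¹ = ⁅a, h⁆ * h := by rw [commutatorElement_def]; group
      rw [e, Subgroup.mul_mem_cancel_left _ hc]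
    have h3 := IsPolycyclic.step _ a h1 h2
    rwa [sup_assoc, zpowers_eq_closure, ← Subgroup.closure_union, Set.union_singleton,
      ← Finset.coe_insert] at h3

/-- Finitely many elements of the upper central series lie in a polycyclic normal subgroup.
To go one step up, first collect the finitely many commutators with the generators of `G`. -/
theorem exists_polycyclic_of_upperCentralSeries {S : Finset G} (hS : closure (S : Set G) = ⊤)
    (i : ℕ) : ∀ F : Finset G, (∀ f ∈ F, f ∈ Subgroup.upperCentralSeries G i) →
      ∃ N : Subgroup G, N.Normal ∧ IsPolycyclic N ∧ ∀ f ∈ F, f ∈ N := by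
  classical
  induction i with
  | zero => exact fun F hF => ⟨⊥, inferInstance, .bot, hF⟩
  | succ i ih =>
    intro F hF
    obtain ⟨N, hn, hp, hN⟩ := ih (Finset.image₂ (fun f s => ⁅f, s⁆) F S) (by
      intro c hc
      obtain ⟨f, hf, s, -, rfl⟩ := Finset.mem_image₂.1 hc
      exact Subgroup.mem_upperCentralSeries_succ_iff.1 (hF f hf) s)
    -- Modulo `N` the elements of `F` commute with the generators, hence are central.
    have hc : ∀ f ∈ F, ∀ x, ⁅f, x⁆ ∈ N := by
      intro f hf x
      have hx : x ∈ closure (S : Set G) := by rw [hS]; trivial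
      rw [← QuotientGroup.eq_one_iff]
      change ⁅(f : G ⧸ N), (x : G ⧸ N)⁆ = 1
      rw [commutatorElement_eq_one_iff_commute]
      induction hx using closure_induction with
      | mem y hy =>
        exact commute_mk_of_commutator_mem (hN _ (Finset.mem_image₂_of_mem hf hy))
      | one => exact Commute.one_right _
      | mul y z _ _ hy hz => exact hy.mul_right hz
      | inv y _ hy => exact hy.inv_right
    refine ⟨N ⊔ closure (F : Set G), ?_, hp.sup_closure F hc, fun f hf =>
      (le_sup_right : closure (F : Set G) ≤ _) (subset_closure hf)⟩
    have hc' : ∀ n ∈ N ⊔ closure (F : Set G), ∀ x, ⁅n, x⁆ ∈ N := by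
      intro n hn' x
      rw [← QuotientGroup.eq_one_iff]
      change ⁅(n : G ⧸ N), (x : G ⧸ N)⁆ = 1
      rw [commutatorElement_eq_one_iff_commute]
      have hle : N ⊔ closure (F : Set G) ≤
          (centralizer {(x : G ⧸ N)}).comap (QuotientGroup.mk' N) := by
        refine sup_le (fun m hm => ?_) ((closure_le _).2 fun f hf => ?_)
        · rw [mem_comap, QuotientGroup.mk'_apply, (QuotientGroup.eq_one_iff m).2 hm]
          exact one_mem _
        · rw [SetLike.mem_coe, mem_comap, mem_centralizer_iff]
          rintro _ rfl
          exact (commute_mk_of_commutator_mem (hc f hf x)).eq.symm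
      have := hle hn'
      rw [mem_comap, mem_centralizer_iff] at this
      exact (this _ rfl).symm
    constructor
    intro n hn' x
    have e : x * n * x⁻¹ = ⁅n, x⁆⁻¹ * n := by rw [commutatorElement_def]; group
    rw [e]
    exact mul_mem (inv_mem ((le_sup_left : N ≤ _) (hc' n hn' x))) hn'

/-- Finitely generated nilpotent groups are polycyclic. -/
theorem isPolycyclic_top [Group.IsNilpotent G] [Group.FG G] :
    IsPolycyclic (⊤ : Subgroup G) := by
  obtain ⟨S, hS⟩ := (Group.fg_def (G := G)).1 inferInstance
  obtain ⟨c, hc⟩ := Group.IsNilpotent.nilpotent G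
  obtain ⟨N, hn, hp, hN⟩ := exists_polycyclic_of_upperCentralSeries hS c S
    (fun f _ => by rw [hc]; trivial)
  have : N = ⊤ := by
    rw [eq_top_iff, ← hS, closure_le]
    exact fun f hf => hN f hf
  rwa [this] at hp

/-- A torsion subgroup meets a polycyclic subgroup in a finite set: a cyclic extension of
infinite order adds no torsion elements, one of finite order adds finitely many cosets. -/
theorem finite_inf_of_polycyclic (T : Subgroup G) (hT : ∀ t ∈ T, IsOfFinOrder t)
    {N : Subgroup G} (hN : IsPolycyclic N) : {t | t ∈ T ∧ t ∈ N}.Finite := by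
  induction hN with
  | bot => exact (Set.finite_singleton (1 : G)).subset fun t ht => ht.2
  | step N s hN hs ih =>
    by_cases h : ∃ m : ℕ, 0 < m ∧ s ^ m ∈ N
    · obtain ⟨m, hm, hsm⟩ := h
      have hcov : {t | t ∈ T ∧ t ∈ N ⊔ zpowers s} ⊆
          ⋃ k ∈ Finset.range m, {t | t ∈ T ∧ t * (s ^ k)⁻¹ ∈ N} := by
        rintro t ⟨ht, htN⟩
        obtain ⟨n, hn, k, rfl⟩ := (mem_sup_zpowers hs).1 htN
        have hm' : (0 : ℤ) < m := by exact_mod_cast hm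
        have hk0 := Int.emod_nonneg k hm'.ne'
        have hk1 := Int.emod_lt_of_pos k hm'
        simp only [Set.mem_iUnion, Finset.mem_range, Set.mem_ofPred_eq]
        refine ⟨(k % m).toNat, by omega, ht, ?_⟩
        have e : s ^ (k % m).toNat = s ^ (k % (m : ℤ)) := by
          rw [← zpow_natCast, Int.toNat_of_nonneg hk0]
        rw [e, mul_assoc, ← zpow_neg, ← zpow_add]
        have e2 : k + -(k % (m : ℤ)) = m * (k / m) := by
          have := Int.emod_add_mul_ediv k m
          omega
        rw [e2, zpow_mul, zpow_natCast]
        exact mul_mem hn (zpow_mem hsm _)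
      refine Set.Finite.subset (Set.Finite.biUnion (Finset.finite_toSet _) fun k _ => ?_) hcov
      rcases Set.eq_empty_or_nonempty {t | t ∈ T ∧ t * (s ^ k)⁻¹ ∈ N} with h0 | ⟨t₀, ht₀, ht₀N⟩
      · rw [h0]; exact Set.finite_empty
      · refine (ih.image (fun y => y * t₀)).subset ?_
        rintro t ⟨ht, htN⟩
        refine ⟨t * t₀⁻¹, ⟨mul_mem ht (inv_mem ht₀), ?_⟩, by simp⟩
        have e : t * t₀⁻¹ = t * (s ^ k)⁻¹ * (t₀ * (s ^ k)⁻¹)⁻¹ := by group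
        rw [e]
        exact mul_mem htN (inv_mem ht₀N)
    · refine ih.subset ?_
      rintro t ⟨ht, htN⟩
      refine ⟨ht, ?_⟩
      obtain ⟨n, hn, k, rfl⟩ := (mem_sup_zpowers hs).1 htN
      obtain ⟨m, hm, hpow⟩ := isOfFinOrder_iff_pow_eq_one.1 (hT _ ht)
      -- Modulo `N` the torsion element `n * s ^ k` is `s ^ k`, and `s` has infinite order there.
      have key : ∀ j : ℕ, ∃ n' ∈ N, (n * s ^ k) ^ j = n' * s ^ (k * j) := by
        intro j
        induction j with
        | zero => exact ⟨1, one_mem _, by simp⟩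
        | succ j ih =>
          obtain ⟨n', hn', e⟩ := ih
          have hsk : s ^ k ∈ normalizer (N : Set G) := zpow_mem hs k
          refine ⟨n * (s ^ k * n' * (s ^ k)⁻¹),
            mul_mem hn ((mem_normalizer_iff.1 hsk n').1 hn'), ?_⟩
          have e1 : s ^ (k * ((j + 1 : ℕ) : ℤ)) = s ^ k * s ^ (k * (j : ℤ)) := by
            rw [← zpow_add]; congr 1; push_cast; ring
          rw [pow_succ', e, e1]
          group
      obtain ⟨n', hn', e⟩ := key m
      rw [hpow] at e
      have hmem : s ^ (k * m) ∈ N := by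
        have : s ^ (k * m) = n'⁻¹ := by rw [eq_inv_iff_mul_eq_one, mul_eq_one_comm]; exact e.symm
        rw [this]; exact inv_mem hn'
      have hk : k = 0 := by
        by_contra hk
        apply h
        refine ⟨(k * m).natAbs, by simp; omega, ?_⟩
        rcases Int.natAbs_eq (k * m) with h' | h'
        · rw [h', zpow_natCast] at hmem; exact hmem
        · rw [h', zpow_neg, zpow_natCast] at hmem; exact (inv_mem_iff (H := N)).1 hmem
      rw [hk, zpow_zero, mul_one]
      exact hn

theorem finite_torsion [Group.IsNilpotent G] [Group.FG G] : {g : G | IsOfFinOrder g}.Finite :=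
  (finite_inf_of_polycyclic (torsionSubgroup G) (fun _ h => h) isPolycyclic_top).subset
    fun _ hg => ⟨hg, trivial⟩

end GroupTheory

/-! ### Polynomial growth -/

section Growth

open Subgroup
open scoped commutatorElement Classical

variable {G : Type*} [Group G]

/-- The products of at most `n` elements of `F`. -/
def ball (F : Finset G) (n : ℕ) : Set G :=
  {g | ∃ l : List G, l.length ≤ n ∧ (∀ x ∈ l, x ∈ F) ∧ l.prod = g}

theorem one_mem_ball (F : Finset G) (n : ℕ) : (1 : G) ∈ ball F n :=
  ⟨[], by simp, by simp, rfl⟩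

theorem mem_ball_one {F : Finset G} {x : G} (hx : x ∈ F) : x ∈ ball F 1 :=
  ⟨[x], by simp, by simpa using hx, by simp⟩

theorem mul_mem_ball {F : Finset G} {n m : ℕ} {x y : G} (hx : x ∈ ball F n) (hy : y ∈ ball F m) :
    x * y ∈ ball F (n + m) := by
  obtain ⟨l, hl, hF, rfl⟩ := hx
  obtain ⟨l', hl', hF', rfl⟩ := hy
  refine ⟨l ++ l', by simp; omega, ?_, by simp⟩
  intro x hx
  rcases List.mem_append.1 hx with h | h
  exacts [hF x h, hF' x h]

theorem ball_mono {F F' : Finset G} (h : F ⊆ F') {n m : ℕ} (hnm : n ≤ m) :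
    ball F n ⊆ ball F' m := by
  rintro _ ⟨l, hl, hF, rfl⟩
  exact ⟨l, hl.trans hnm, fun x hx => h (hF x hx), rfl⟩

theorem finite_ball (F : Finset G) (n : ℕ) : (ball F n).Finite := by
  have h := (List.finite_length_le (F : Set G) n).image fun l => (l.map Subtype.val).prod
  refine h.subset ?_
  rintro _ ⟨l, hl, hF, rfl⟩
  refine ⟨l.attach.map fun x => ⟨x.1, hF x.1 x.2⟩, by simpa using hl, ?_⟩
  simp [List.map_map, Function.comp_def]

/-- Every finite subset of `N` has polynomially growing balls. -/
def PolyGrowth (N : Subgroup G) : Prop :=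
  ∀ F : Finset G, (∀ x ∈ F, x ∈ N) → ∃ C r : ℕ, ∀ n, (ball F n).ncard ≤ C * (n + 1) ^ r

/-- Conjugating an element of the `j`-th term of the upper central series by the `b`-th power of
a fixed element makes its length grow at most like a polynomial of degree `j` in `b`. -/
theorem exists_conj_mem_ball {N : Subgroup G} {σ : G} (hσ : ∀ x ∈ N, σ * x * σ⁻¹ ∈ N) (j : ℕ) :
    ∀ a ∈ N, a ∈ Subgroup.upperCentralSeries G j → ∃ F : Finset G, (∀ x ∈ F, x ∈ N) ∧
      ∀ b : ℕ, σ ^ b * a * (σ ^ b)⁻¹ ∈ ball F ((b + 1) ^ j) := by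
  induction j with
  | zero =>
    intro a _ ha
    have : a = 1 := by simpa using ha
    subst this
    exact ⟨∅, by simp, fun b => by simpa using one_mem_ball _ _⟩
  | succ j ih =>
    intro a haN ha
    have hD : σ * a * σ⁻¹ * a⁻¹ ∈ Subgroup.upperCentralSeries G j := by
      have h := inv_mem (Subgroup.mem_upperCentralSeries_succ_iff.1 ha σ)
      simpa [commutatorElement_def, mul_assoc] using h
    obtain ⟨F, hF, hb⟩ := ih _ (mul_mem (hσ a haN) (inv_mem haN)) hD
    refine ⟨insert a F, ?_, ?_⟩
    · intro x hx
      rcases Finset.mem_insert.1 hx with rfl | h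
      exacts [haN, hF x h]
    intro b
    induction b with
    | zero => simpa using mem_ball_one (Finset.mem_insert_self a F)
    | succ b ihb =>
      have e : σ ^ (b + 1) * a * (σ ^ (b + 1))⁻¹ =
          (σ ^ b * (σ * a * σ⁻¹ * a⁻¹) * (σ ^ b)⁻¹) * (σ ^ b * a * (σ ^ b)⁻¹) := by
        rw [pow_succ]; group
      rw [e]
      refine ball_mono (Finset.Subset.refl _) ?_
        (mul_mem_ball (ball_mono (Finset.subset_insert a F) le_rfl (hb b)) ihb)
      have h1 : (b + 1) ^ j ≤ (b + 1 + 1) ^ j := Nat.pow_le_pow_left (by omega) j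
      calc (b + 1) ^ j + (b + 1) ^ (j + 1) = (b + 1) ^ j * (b + 1 + 1) := by ring
        _ ≤ (b + 1 + 1) ^ j * (b + 1 + 1) := Nat.mul_le_mul_right _ h1
        _ = _ := by ring

/-- Cyclic extensions preserve polynomial growth. In a product of `n` elements `a * s ^ k`, moving
all powers of `s` to the right replaces each `a` by a conjugate whose length is polynomial in `n`. -/
theorem PolyGrowth.step [Group.IsNilpotent G] {N : Subgroup G} (hN : PolyGrowth N) {s : G}
    (hs : s ∈ normalizer (N : Set G)) : PolyGrowth (N ⊔ zpowers s) := by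
  intro F hF
  obtain ⟨c, hc⟩ := Group.IsNilpotent.nilpotent G
  have hmem : ∀ x : G, x ∈ Subgroup.upperCentralSeries G c := fun x => by rw [hc]; trivial
  have h1 : ∀ x ∈ N, s * x * s⁻¹ ∈ N := fun x hx => (mem_normalizer_iff.1 hs x).1 hx
  have h2 : ∀ x ∈ N, s⁻¹ * x * s⁻¹⁻¹ ∈ N := fun x hx =>
    (mem_normalizer_iff.1 (inv_mem hs) x).1 hx
  have hdec : ∀ x : F, ∃ n ∈ N, ∃ k : ℤ, (x : G) = n * s ^ k := fun x =>
    (mem_sup_zpowers hs).1 (hF x x.2)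
  choose a ha k hk using hdec
  choose F₁ hF₁ hb₁ using fun x => exists_conj_mem_ball h1 c (a x) (ha x) (hmem _)
  choose F₂ hF₂ hb₂ using fun x => exists_conj_mem_ball h2 c (a x) (ha x) (hmem _)
  let F' : Finset G := Finset.univ.biUnion fun x => F₁ x ∪ F₂ x
  have hF' : ∀ x ∈ F', x ∈ N := by
    intro x hx
    obtain ⟨y, -, hy⟩ := Finset.mem_biUnion.1 hx
    rcases Finset.mem_union.1 hy with h | h
    exacts [hF₁ _ _ h, hF₂ _ _ h]
  have hsub : ∀ x, F₁ x ∪ F₂ x ⊆ F' := fun x =>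
    Finset.subset_biUnion_of_mem (fun x => F₁ x ∪ F₂ x) (Finset.mem_univ x)
  have hconj : ∀ (x : F) (b : ℤ), s ^ b * a x * (s ^ b)⁻¹ ∈ ball F' ((b.natAbs + 1) ^ c) := by
    intro x b
    rcases Int.natAbs_eq b with h | h
    · have := ball_mono (Finset.subset_union_left.trans (hsub x)) le_rfl (hb₁ x b.natAbs)
      rwa [← zpow_natCast, ← h] at this
    · have := ball_mono (Finset.subset_union_right.trans (hsub x)) le_rfl (hb₂ x b.natAbs)
      rwa [← zpow_natCast, inv_zpow', ← h] at this
  let K : ℕ := ∑ x, (k x).natAbs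
  have hK : ∀ x, (k x).natAbs ≤ K := fun x =>
    Finset.single_le_sum (f := fun x => (k x).natAbs) (fun _ _ => Nat.zero_le _)
      (Finset.mem_univ x)
  -- Move all powers of `s` in a product to the right; `b` is the exponent accumulated so far.
  have key : ∀ (P : ℕ) (l : List G), (∀ x ∈ l, x ∈ F) → ∀ b : ℤ, b.natAbs + K * l.length ≤ P →
      ∃ u ∈ ball F' (l.length * (P + 1) ^ c), ∃ m : ℤ, m.natAbs ≤ P ∧
        s ^ b * l.prod = u * s ^ m := by
    intro P l
    induction l with
    | nil =>
      intro _ b hb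
      exact ⟨1, one_mem_ball _ _, b, by simpa using hb, by simp⟩
    | cons x l ih =>
      intro hl b hb
      have hx : x ∈ F := hl x (by simp)
      have hKx := hK ⟨x, hx⟩
      have hlen : K * (x :: l).length = K * l.length + K := by simp [mul_add]
      obtain ⟨u, hu, m, hm, e⟩ := ih (fun y hy => hl y (by simp [hy])) (b + k ⟨x, hx⟩) (by
        have := Int.natAbs_add_le b (k ⟨x, hx⟩)
        omega)
      have hc' := ball_mono (Finset.Subset.refl _)
        (Nat.pow_le_pow_left (show b.natAbs + 1 ≤ P + 1 by omega) c) (hconj ⟨x, hx⟩ b)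
      refine ⟨_, ball_mono (Finset.Subset.refl _) (le_of_eq ?_) (mul_mem_ball hc' hu), m, hm, ?_⟩
      · rw [List.length_cons]; ring
      · rw [mul_assoc _ u, ← e, List.prod_cons, zpow_add]
        have := hk ⟨x, hx⟩
        simp only at this
        nth_rw 1 [this]
        group
  obtain ⟨C, r, hCr⟩ := hN F' hF'
  refine ⟨C * (K + 1) ^ (c * r) * (2 * K + 1), (c + 1) * r + 1, fun n => ?_⟩
  have hcov : ball F n ⊆ (fun y : G × ℤ => y.1 * s ^ y.2) ''
      (ball F' (n * (K * n + 1) ^ c) ×ˢ (Finset.Icc (-(K * n : ℕ) : ℤ) (K * n : ℕ) : Set ℤ)) := by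
    rintro _ ⟨l, hl, hlF, rfl⟩
    obtain ⟨u, hu, m, hm, e⟩ := key (K * n) l hlF 0
      (by simpa using Nat.mul_le_mul_left K hl)
    refine ⟨(u, m), ⟨ball_mono (Finset.Subset.refl _) (Nat.mul_le_mul_right _ hl) hu, ?_⟩, ?_⟩
    · rw [Finset.mem_coe, Finset.mem_Icc]
      constructor <;> omega
    · simpa using e.symm
  have hfin := (finite_ball F' (n * (K * n + 1) ^ c)).prod
    (Finset.finite_toSet (Finset.Icc (-(K * n : ℕ) : ℤ) (K * n : ℕ)))
  have h3 := (Set.ncard_le_ncard hcov (hfin.image _)).trans (Set.ncard_image_le hfin)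
  rw [Set.ncard_prod, Set.ncard_coe_finset, Int.card_Icc] at h3
  have h4 : ((K * n : ℕ) + 1 - (-(K * n : ℕ)) : ℤ).toNat ≤ (2 * K + 1) * (n + 1) := by
    have : (2 * K + 1) * (n + 1) = 2 * (K * n) + 2 * K + n + 1 := by ring
    omega
  have h5 : n * (K * n + 1) ^ c + 1 ≤ (K + 1) ^ c * (n + 1) ^ (c + 1) := by
    have h6 : K * n + 1 ≤ (K + 1) * (n + 1) := by nlinarith
    have h7 : 1 ≤ ((K + 1) * (n + 1)) ^ c := Nat.one_le_pow _ _ (by positivity)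
    calc n * (K * n + 1) ^ c + 1 ≤ n * ((K + 1) * (n + 1)) ^ c + ((K + 1) * (n + 1)) ^ c :=
          Nat.add_le_add (Nat.mul_le_mul_left _ (Nat.pow_le_pow_left h6 c)) h7
      _ = _ := by rw [mul_pow]; ring
  calc (ball F n).ncard ≤ _ := h3
    _ ≤ (C * ((K + 1) ^ c * (n + 1) ^ (c + 1)) ^ r) * ((2 * K + 1) * (n + 1)) :=
        Nat.mul_le_mul ((hCr _).trans (Nat.mul_le_mul_left _ (Nat.pow_le_pow_left h5 r))) h4
    _ = _ := by rw [mul_pow, ← pow_mul, ← pow_mul]; ring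

theorem polyGrowth_of_polycyclic [Group.IsNilpotent G] {N : Subgroup G} (hN : IsPolycyclic N) :
    PolyGrowth N := by
  induction hN with
  | bot =>
    intro F hF
    refine ⟨1, 0, fun n => ?_⟩
    have : ball F n ⊆ {1} := by
      rintro _ ⟨l, -, hl, rfl⟩
      exact List.prod_eq_one fun x hx => mem_bot.1 (hF x (hl x hx))
    simpa using Set.ncard_le_ncard this
  | step N s _ hs ih => exact ih.step hs

/-- Polynomial growth of virtually nilpotent groups: words are rewritten from left to right over
the finite-index subgroup with the help of coset representatives. -/
theorem polyGrowth_of_finiteIndex (N : Subgroup G) [N.Normal] [N.FiniteIndex]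
    [Group.IsNilpotent N] [Group.FG N] (F : Finset G) :
    ∃ C r : ℕ, ∀ n, (ball F n).ncard ≤ C * (n + 1) ^ r := by
  let ρ : G ⧸ N → G := Quotient.out
  have hρ : ∀ c, (ρ c : G ⧸ N) = c := fun c => Quotient.out_eq c
  have hh : ∀ (g : G) (c : G ⧸ N), (ρ (g * c))⁻¹ * (g * ρ c) ∈ N := by
    intro g c
    rw [← QuotientGroup.eq_one_iff, QuotientGroup.mk_mul, QuotientGroup.mk_mul,
      QuotientGroup.mk_inv, hρ, hρ, inv_mul_cancel]
  let h : G → G ⧸ N → N := fun g c => ⟨_, hh g c⟩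
  have : Fintype (G ⧸ N) := Fintype.ofFinite _
  let F' : Finset N := Finset.image₂ h F Finset.univ
  obtain ⟨C, r, hCr⟩ := polyGrowth_of_polycyclic (isPolycyclic_top (G := N)) F'
    fun _ _ => trivial
  refine ⟨Fintype.card (G ⧸ N) * C, r, fun n => ?_⟩
  have key : ∀ l : List G, (∀ x ∈ l, x ∈ F) → ∀ c, ∃ u ∈ ball F' l.length,
      l.prod * ρ c = ρ (l.prod * c) * (u : G) := by
    intro l
    induction l with
    | nil => exact fun _ c => ⟨1, one_mem_ball _ _, by simp⟩
    | cons x l ih =>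
      intro hl c
      obtain ⟨u, hu, e⟩ := ih (fun y hy => hl y (by simp [hy])) c
      refine ⟨h x (l.prod * c) * u, ?_, ?_⟩
      · rw [List.length_cons, add_comm]
        exact mul_mem_ball
          (mem_ball_one (Finset.mem_image₂_of_mem (hl x (by simp)) (Finset.mem_univ _))) hu
      · rw [List.prod_cons, mul_assoc, e, QuotientGroup.mk_mul, mul_assoc (x : G ⧸ N)]
        simp only [h, Subgroup.coe_mul]
        group
  have hcov : ball F n ⊆ (fun y : (G ⧸ N) × N => ρ y.1 * y.2 * (ρ 1)⁻¹) ''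
      (Set.univ ×ˢ ball F' n) := by
    rintro _ ⟨l, hl, hlF, rfl⟩
    obtain ⟨u, hu, e⟩ := key l hlF 1
    exact ⟨(l.prod * 1, u), ⟨trivial, ball_mono (Finset.Subset.refl _) hl hu⟩, by
      simp only [← e, mul_inv_cancel_right]⟩
  have hfin := (Set.finite_univ (α := G ⧸ N)).prod (finite_ball F' n)
  have h3 := (Set.ncard_le_ncard hcov (hfin.image _)).trans (Set.ncard_image_le hfin)
  rw [Set.ncard_prod, Set.ncard_univ, Nat.card_eq_fintype_card] at h3
  calc _ ≤ _ := h3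
    _ ≤ Fintype.card (G ⧸ N) * (C * (n + 1) ^ r) := Nat.mul_le_mul_left _ (hCr n)
    _ = _ := by ring

end Growth

/-! ### The dual action and the orbit of the powers of a state -/

namespace Mealy

section Basic

variable {Q A : Type*} (M : Mealy Q A)

@[simp] theorem length_actA (q : Q) (w : List A) : (M.actA q w).length = w.length := by
  induction w generalizing q with
  | nil => rfl
  | cons a w ih => simp [actA, ih]

@[simp] theorem length_actW (s : List Q) (w : List A) : (M.actW s w).length = w.length := by
  induction s with
  | nil => rfl
  | cons q s ih => simp [actW, ih]

@[simp] theorem length_stW (s : List Q) (w : List A) : (M.stW s w).length = s.length := by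
  induction s with
  | nil => rfl
  | cons q s ih => simp [stW, ih]

theorem actW_nil (s : List Q) : M.actW s [] = [] :=
  List.length_eq_zero_iff.1 (by simp)

theorem stW_nil (s : List Q) : M.stW s [] = s := by
  induction s with
  | nil => rfl
  | cons q s ih => simp [stW, ih, actW_nil, stA]

theorem stW_append_states (s t : List Q) (w : List A) :
    M.stW (s ++ t) w = M.stW s (M.actW t w) ++ M.stW t w := by
  induction s with
  | nil => simp [stW]
  | cons q s ih => simp [stW, ih, actW_append_states]

theorem iterate_stW (u : List A) (k : ℕ) (s : List Q) :
    (fun s => M.stW s u)^[k] s = M.stW s (List.replicate k u).flatten := by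
  induction k generalizing s with
  | zero => simp [stW_nil]
  | succ k ih => simp [ih, stW_append, List.replicate_succ]

theorem iterate_actW (s : List Q) (k : ℕ) (u : List A) :
    (M.actW s)^[k] u = M.actW (List.replicate k s).flatten u := by
  induction k generalizing u with
  | zero => simp [actW]
  | succ k ih => rw [Function.iterate_succ_apply', ih, ← actW_append_states, List.replicate_succ,
      List.flatten_cons]

variable {M}

theorem actA_injective (hinv : M.Invertible) (q : Q) : Function.Injective (M.actA q) := by
  intro u
  induction u generalizing q with
  | nil =>
    intro v h
    have := congrArg List.length h
    simpa [eq_comm] using this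
  | cons a u ih =>
    intro v h
    cases v with
    | nil => simp [actA] at h
    | cons b v =>
      simp only [actA, List.cons.injEq] at h
      obtain rfl := (hinv q).1 h.1
      rw [ih _ h.2]

theorem actW_injective (hinv : M.Invertible) (s : List Q) : Function.Injective (M.actW s) := by
  induction s with
  | nil => exact fun _ _ h => h
  | cons q s ih => exact (actA_injective hinv q).comp ih

theorem stA_injective (hrev : M.Reversible) (u : List A) :
    Function.Injective fun q => M.stA q u := by
  induction u with
  | nil => exact fun _ _ h => h
  | cons a u ih => exact ih.comp (hrev a).1

theorem stW_injective (hrev : M.Reversible) (u : List A) :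
    Function.Injective fun s => M.stW s u := by
  intro s
  induction s with
  | nil =>
    intro t h
    have := congrArg List.length h
    simpa [eq_comm] using this
  | cons q s ih =>
    intro t h
    cases t with
    | nil => simp [stW] at h
    | cons p t =>
      simp only [stW, List.cons.injEq] at h
      obtain rfl := ih h.2
      rw [stA_injective hrev _ h.1]

/-- A length-preserving injection of words over a finite alphabet has only periodic points. -/
theorem exists_iterate_eq {X : Type*} [Finite X] {f : List X → List X}
    (hf : Function.Injective f) (hl : ∀ x, (f x).length = x.length) (x : List X) :
    ∃ k, 0 < k ∧ f^[k] x = x := by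
  have := (List.finite_length_eq X x.length).to_subtype
  let g : {y : List X | y.length = x.length} → {y : List X | y.length = x.length} :=
    fun y => ⟨f y, (hl y).trans y.2⟩
  have hg : Function.Injective g := fun y z h => Subtype.ext (hf (congrArg Subtype.val h))
  obtain ⟨k, hk, h⟩ := hg.mem_periodicPts ⟨x, rfl⟩
  refine ⟨k, hk, ?_⟩
  have hit : ∀ (j : ℕ) (y), ((g^[j] y : _) : List X) = f^[j] y := by
    intro j
    induction j with
    | zero => exact fun _ => rfl
    | succ j ih => exact fun y => ih (g y)
  rw [← hit k ⟨x, rfl⟩]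
  exact congrArg Subtype.val h

/-- The transitions induced by letters are invertible on words of states of given length. -/
theorem exists_stW_eq [Finite Q] (hrev : M.Reversible) (s : List Q) (u : List A) :
    ∃ u', M.stW (M.stW s u) u' = s := by
  obtain ⟨k, hk, h⟩ := exists_iterate_eq (stW_injective hrev u) (fun s => M.length_stW s u) s
  obtain ⟨j, rfl⟩ := Nat.exists_eq_succ_of_ne_zero hk.ne'
  refine ⟨(List.replicate j u).flatten, ?_⟩
  rw [Function.iterate_succ_apply, iterate_stW] at h
  exact h

end Basic

section Orbit

variable {Q A : Type*} (M : Mealy Q A) (q : Q)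

/-- The words of states reached from powers of `q`; for each length, a single orbit of the
dual action. -/
def Orb : Set (List Q) := {v | ∃ k u, M.stW (List.replicate k q) u = v}

variable {M q}

theorem replicate_mem_orb (k : ℕ) : List.replicate k q ∈ M.Orb q := ⟨k, [], M.stW_nil _⟩

theorem exists_of_mem_orb {v : List Q} (h : v ∈ M.Orb q) :
    ∃ u, M.stW (List.replicate v.length q) u = v := by
  obtain ⟨k, u, rfl⟩ := h
  exact ⟨u, by simp⟩

theorem stW_mem_orb {v : List Q} (h : v ∈ M.Orb q) (u : List A) : M.stW v u ∈ M.Orb q := by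
  obtain ⟨k, u', rfl⟩ := h
  exact ⟨k, u' ++ u, M.stW_append _ _ _⟩

theorem orb_transitive [Finite Q] (hrev : M.Reversible) {v v' : List Q} (h : v ∈ M.Orb q)
    (h' : v' ∈ M.Orb q) (hl : v.length = v'.length) : ∃ u, M.stW v u = v' := by
  obtain ⟨u, hu⟩ := exists_of_mem_orb h
  obtain ⟨u', hu'⟩ := exists_of_mem_orb h'
  obtain ⟨w, hw⟩ := exists_stW_eq hrev (List.replicate v.length q) u
  rw [hu] at hw
  exact ⟨w ++ u', by rw [stW_append, hw, hl, hu']⟩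

theorem mem_orb_append {p r : List Q} (h : p ++ r ∈ M.Orb q) : p ∈ M.Orb q ∧ r ∈ M.Orb q := by
  obtain ⟨u, hu⟩ := exists_of_mem_orb h
  rw [List.length_append, List.replicate_add, stW_append_states] at hu
  obtain ⟨h1, h2⟩ := List.append_inj hu (by simp)
  exact ⟨⟨_, _, h1⟩, ⟨_, _, h2⟩⟩

variable (M q) in
/-- The letters by which a word can be extended to the left inside the orbit. -/
def leftExt (p : List Q) : Set Q := {x | x :: p ∈ M.Orb q}

theorem ncard_leftExt_le [Finite Q] (hrev : M.Reversible) {p p' : List Q} (h : p ∈ M.Orb q)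
    (h' : p' ∈ M.Orb q) (hl : p.length = p'.length) :
    (M.leftExt q p).ncard ≤ (M.leftExt q p').ncard := by
  obtain ⟨w, rfl⟩ := orb_transitive hrev h h' hl
  refine Set.ncard_le_ncard_of_injOn (fun x => M.stA x (M.actW p w)) ?_
    (stA_injective hrev _).injOn (Set.toFinite _)
  exact fun x hx => stW_mem_orb (v := x :: p) hx w

theorem leftExt_append_subset (p r : List Q) : M.leftExt q (p ++ r) ⊆ M.leftExt q p :=
  fun x hx => (mem_orb_append (p := x :: p) hx).1

variable (M q) in
/-- From length `m` on, every word of the orbit has exactly `d` left extensions. -/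
def Stable (m d : ℕ) : Prop :=
  0 < d ∧ ∀ p ∈ M.Orb q, m ≤ p.length → (M.leftExt q p).ncard = d

/-- The number of left extensions depends only on the length of the word and does
not increase with it. -/
theorem exists_stable [Finite Q] (hrev : M.Reversible) : ∃ m d, M.Stable q m d := by
  let f : ℕ → ℕ := fun k => (M.leftExt q (List.replicate k q)).ncard
  have hf : Antitone f := by
    refine antitone_nat_of_succ_le fun k => ?_
    have := leftExt_append_subset (M := M) (q := q) (List.replicate k q) [q]
    rw [← List.replicate_succ'] at this
    exact Set.ncard_le_ncard this (Set.toFinite _)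
  obtain ⟨m, hm⟩ : ∃ m, ∀ k, m ≤ k → f m = f k :=
    ⟨Function.argmin f, fun k hk => le_antisymm (Function.argmin_le f k) (hf hk)⟩
  refine ⟨m, f m, ?_, fun p hp hl => ?_⟩
  · exact (Set.ncard_pos (Set.toFinite _)).2 ⟨q, replicate_mem_orb (m + 1)⟩
  · rw [hm _ hl]
    exact le_antisymm (ncard_leftExt_le hrev hp (replicate_mem_orb _) (by simp))
      (ncard_leftExt_le hrev (replicate_mem_orb _) hp (by simp))

/-- Words of the orbit overlapping in a long enough word can be glued. -/
theorem Stable.glue [Finite Q] {m d : ℕ} (hs : M.Stable q m d) {y p r : List Q}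
    (hp : m ≤ p.length) (h1 : y ++ p ∈ M.Orb q) (h2 : p ++ r ∈ M.Orb q) :
    y ++ p ++ r ∈ M.Orb q := by
  induction y with
  | nil => exact h2
  | cons x y ih =>
    have h3 := (mem_orb_append (p := [x]) (r := y ++ p) h1).2
    have h4 := ih h3
    have : M.leftExt q (y ++ p ++ r) = M.leftExt q (y ++ p) :=
      Set.eq_of_subset_of_ncard_le (leftExt_append_subset _ _)
        (by rw [hs.2 _ h4 (by simp; omega), hs.2 _ h3 (by simp; omega)]) (Set.toFinite _)
    have hx : x ∈ M.leftExt q (y ++ p) := h1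
    rw [← this] at hx
    exact hx

open scoped Classical in
variable (M q) in
/-- The words of length `n` that can be put in front of `r` inside the orbit. -/
noncomputable def ext [Finite Q] (r : List Q) (n : ℕ) : Finset (List Q) :=
  ((List.finite_length_eq Q n).subset
    (fun _ h => h.1 : {x : List Q | x.length = n ∧ x ++ r ∈ M.Orb q} ⊆ _)).toFinset

theorem mem_ext [Finite Q] {r : List Q} {n : ℕ} {x : List Q} :
    x ∈ M.ext q r n ↔ x.length = n ∧ x ++ r ∈ M.Orb q := by
  simp [ext]

open scoped Classical in
theorem Stable.card_ext [Finite Q] {m d : ℕ} (hs : M.Stable q m d) {r : List Q}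
    (hr : r ∈ M.Orb q) (hm : m ≤ r.length) (n : ℕ) : (M.ext q r n).card = d ^ n := by
  induction n with
  | zero =>
    have : M.ext q r 0 = {[]} := by
      ext x
      rw [mem_ext, Finset.mem_singleton, List.length_eq_zero_iff]
      exact ⟨fun h => h.1, fun h => ⟨h, by rw [h]; exact hr⟩⟩
    rw [this]; rfl
  | succ n ih =>
    have : M.ext q r (n + 1) = (M.ext q r n).biUnion fun x =>
        (Set.toFinite (M.leftExt q (x ++ r))).toFinset.image fun a => a :: x := by
      ext y
      simp only [mem_ext, Finset.mem_biUnion, Finset.mem_image, Set.Finite.mem_toFinset]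
      constructor
      · rintro ⟨hl, hy⟩
        cases y with
        | nil => simp at hl
        | cons a y =>
          exact ⟨y, ⟨by simpa using hl, (mem_orb_append (p := [a]) (r := y ++ r) hy).2⟩,
            a, hy, rfl⟩
      · rintro ⟨x, ⟨hl, hx⟩, a, ha, rfl⟩
        exact ⟨by simpa using hl, ha⟩
    rw [this, Finset.card_biUnion]
    · rw [Finset.sum_congr rfl (g := fun _ => d), Finset.sum_const, ih, smul_eq_mul, pow_succ]
      intro x hx
      rw [mem_ext] at hx
      rw [Finset.card_image_of_injective _ (fun a b h => by simpa using h),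
        ← Set.ncard_eq_toFinset_card]
      exact hs.2 _ hx.2 (by simp; omega)
    · intro x _ y _ hxy
      refine Finset.disjoint_left.2 fun z hz hz' => hxy ?_
      obtain ⟨a, -, rfl⟩ := Finset.mem_image.1 hz
      obtain ⟨b, -, h⟩ := Finset.mem_image.1 hz'
      simp only [List.cons.injEq] at h
      exact h.2.symm

end Orbit

end Mealy

/-! ### Classes of orbit words -/

namespace Mealy

section Classes

open scoped Classical

variable {Q A G : Type*} [Group G] {M : Mealy Q A} {φ : Q → G} {q : Q}

/-- The product in `G` of the images of the letters of a word of states. -/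
def ev (φ : Q → G) (v : List Q) : G := (v.map φ).prod

theorem ev_append (v w : List Q) : ev φ (v ++ w) = ev φ v * ev φ w := by simp [ev]

theorem ev_flatten_replicate (k : ℕ) (v : List Q) :
    ev φ (List.replicate k v).flatten = ev φ v ^ k := by
  induction k with
  | zero => simp [ev]
  | succ k ih => rw [List.replicate_succ, List.flatten_cons, ev_append, ih, pow_succ']

theorem ev_replicate (k : ℕ) : ev φ (List.replicate k q) = φ q ^ k := by simp [ev]

variable (M φ) in
/-- The map `φ` extends to an embedding into `G` of the semigroup of transformations
generated by `M`. -/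
def Realizes : Prop :=
  ∀ s t : List Q, ev φ s = ev φ t ↔ ∀ w, M.actW s w = M.actW t w

theorem Realizes.ev_stW_eq (hφ : M.Realizes φ) {s t : List Q} (h : ev φ s = ev φ t) (u : List A) :
    ev φ (M.stW s u) = ev φ (M.stW t u) :=
  (hφ _ _).2 (M.actW_stW_congr ((hφ _ _).1 h) u)

/-- If a relabelling respects the classes modulo `ev φ`, it does not increase their number. -/
theorem card_image_ev_image_le {f : List Q → List Q}
    (hf : ∀ x y, ev φ x = ev φ y → ev φ (f x) = ev φ (f y)) (S : Finset (List Q)) :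
    ((S.image f).image (ev φ)).card ≤ (S.image (ev φ)).card := by
  let g : G → G := fun z => ev φ (f (Function.invFun (ev φ) z))
  have : (S.image f).image (ev φ) = (S.image (ev φ)).image g := by
    rw [Finset.image_image, Finset.image_image]
    refine Finset.image_congr fun x _ => hf _ _ ?_
    exact (Function.invFun_eq (f := ev φ) ⟨x, rfl⟩).symm
  rw [this]
  exact Finset.card_image_le

variable [Finite Q]

/-- The stabilizer of `r` in the dual action permutes the left extensions of `r` transitively and
respects the classes modulo `ev φ`; so all classes have the same size. -/
theorem card_class_le (hrev : M.Reversible) (hφ : M.Realizes φ) {r : List Q} {n : ℕ}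
    {v v' : List Q} (hv : v ∈ M.ext q r n) (hv' : v' ∈ M.ext q r n) :
    ((M.ext q r n).filter fun x => ev φ x = ev φ v).card ≤
      ((M.ext q r n).filter fun x => ev φ x = ev φ v').card := by
  rw [mem_ext] at hv hv'
  obtain ⟨u, hu⟩ := orb_transitive hrev hv.2 hv'.2 (by simp [hv.1, hv'.1])
  rw [stW_append_states] at hu
  obtain ⟨h1, h2⟩ := List.append_inj hu (by simp [hv.1, hv'.1])
  refine Finset.card_le_card_of_injOn (fun x => M.stW x (M.actW r u)) ?_
    (stW_injective hrev _).injOn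
  intro x hx
  rw [Finset.mem_coe, Finset.mem_filter, mem_ext] at hx ⊢
  refine ⟨⟨by simpa using hx.1.1, ?_⟩, ?_⟩
  · have := stW_mem_orb hx.1.2 u
    rwa [stW_append_states, h2] at this
  · rw [← h1]; exact hφ.ev_stW_eq hx.2 _

/-- As all classes have the same size, that size times the number of classes is at least the
number of words. -/
theorem card_ext_le (hrev : M.Reversible) (hφ : M.Realizes φ) {r : List Q} {n : ℕ}
    {v : List Q} (hv : v ∈ M.ext q r n) :
    (M.ext q r n).card ≤ ((M.ext q r n).filter fun x => ev φ x = ev φ v).card *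
      ((M.ext q r n).image (ev φ)).card := by
  refine Finset.card_le_mul_card_image _ _ fun z hz => ?_
  obtain ⟨x, hx, rfl⟩ := Finset.mem_image.1 hz
  exact card_class_le hrev hφ hx hv

/-- The number of classes of left extensions only depends on the length of the extended word. -/
theorem Stable.card_image_ext_le {m d : ℕ} (hs : M.Stable q m d) (hrev : M.Reversible)
    (hφ : M.Realizes φ) {r r' : List Q} (hr : r ∈ M.Orb q) (hr' : r' ∈ M.Orb q)
    (hm : m ≤ r.length) (hl : r.length = r'.length) (n : ℕ) :
    ((M.ext q r' n).image (ev φ)).card ≤ ((M.ext q r n).image (ev φ)).card := by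
  obtain ⟨u, hu⟩ := orb_transitive hrev hr hr' hl
  have h1 : (M.ext q r n).image (fun x => M.stW x (M.actW r u)) = M.ext q r' n := by
    refine Finset.eq_of_subset_of_card_le ?_ ?_
    · intro y hy
      obtain ⟨x, hx, rfl⟩ := Finset.mem_image.1 hy
      rw [mem_ext] at hx ⊢
      have := stW_mem_orb hx.2 u
      rw [stW_append_states, hu] at this
      exact ⟨by simpa using hx.1, this⟩
    · rw [Finset.card_image_of_injective _ (stW_injective hrev _), hs.card_ext hr hm,
        hs.card_ext hr' (hl ▸ hm)]
  rw [← h1]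
  exact card_image_ev_image_le (fun x y h => hφ.ev_stW_eq h _) _

/-- If the orbit contains boundedly many elements of `G` in each length, then the powers of `q`
are all states of automata with a bounded number of states, so two of them coincide. -/
theorem isOfFinOrder_of_bounded [Finite A] (hφ : M.Realizes φ) (K m : ℕ)
    (hK : ∀ n, m ≤ n → (ev φ '' {v | v.length = n ∧ v ∈ M.Orb q}).ncard ≤ K) :
    IsOfFinOrder (φ q) := by
  let S : ℕ → Set G := fun n => ev φ '' {v | v.length = n + m ∧ v ∈ M.Orb q}
  have hfin : ∀ n, (S n).Finite := fun n =>
    ((List.finite_length_eq Q (n + m)).subset fun _ h => h.1).image _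
  have hq : ∀ n, ev φ (List.replicate (n + m) q) ∈ S n := fun n =>
    ⟨_, ⟨by simp, replicate_mem_orb _⟩, rfl⟩
  have hι : ∀ n, ∃ ι : S n → Fin K, Function.Injective ι := by
    intro n
    have := (hfin n).fintype
    have hc : Fintype.card (S n) ≤ Fintype.card (Fin K) := by
      rw [Fintype.card_fin, ← Nat.card_eq_fintype_card, Nat.card_coe_set_eq]
      exact hK _ (by omega)
    obtain ⟨ι⟩ := Function.Embedding.nonempty_of_card_le hc
    exact ⟨ι, ι.injective⟩
  choose ι hι using hι
  have hne : ∀ n, Nonempty (S n) := fun n => ⟨⟨_, hq n⟩⟩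
  have hrep : ∀ n (x : S n), ∃ v, (v.length = n + m ∧ v ∈ M.Orb q) ∧ ev φ v = x :=
    fun n x => x.2
  choose rep hrep using hrep
  let f : ∀ n, Fin K → List Q := fun n i => rep n (Function.invFun (ι n) i)
  have hf : ∀ n i, (f n i).length = n + m ∧ f n i ∈ M.Orb q := fun n i => (hrep n _).1
  let idx : ∀ n v, (v.length = n + m ∧ v ∈ M.Orb q) → Fin K := fun n v hv => ι n ⟨_, v, hv, rfl⟩
  have hidx : ∀ n v hv, ev φ (f n (idx n v hv)) = ev φ v := by
    intro n v hv
    rw [(hrep n _).2, Function.leftInverse_invFun (hι n)]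
  have hst : ∀ n i a, (M.stW (f n i) [a]).length = n + m ∧ M.stW (f n i) [a] ∈ M.Orb q :=
    fun n i a => ⟨by simpa using (hf n i).1, stW_mem_orb (hf n i).2 _⟩
  let N : ℕ → Mealy (Fin K) A := fun n =>
    ⟨fun i a => ((M.actW (f n i) [a]).headD a, idx n _ (hst n i a))⟩
  have hN : ∀ n u i, (N n).actA i u = M.actW (f n i) u := by
    intro n u
    induction u with
    | nil => intro i; rw [actW_nil]; rfl
    | cons a u ih =>
      intro i
      have h1 : M.actW (f n i) (a :: u) =
          M.actW (f n i) [a] ++ M.actW (M.stW (f n i) [a]) u := M.actW_append _ [a] u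
      obtain ⟨c, hc⟩ := List.length_eq_one_iff.1 (M.length_actW (f n i) [a])
      have h2 : (N n).actA i (a :: u) = (M.actW (f n i) [a]).headD a ::
          (N n).actA (idx n _ (hst n i a)) u := rfl
      rw [h1, h2, ih, hc, (hφ _ _).1 (hidx n _ (hst n i a)) u]
      rfl
  have : Finite (Mealy (Fin K) A) :=
    Finite.of_injective (β := Fin K → A → A × Fin K) Mealy.step fun x y h => by
      cases x; cases y; exact congrArg _ h
  obtain ⟨n, n', hne', he⟩ := Finite.exists_ne_map_eq_of_infinite fun n =>
    (N n, idx n (List.replicate (n + m) q) ⟨by simp, replicate_mem_orb _⟩)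
  simp only [Prod.mk.injEq] at he
  have key : ev φ (List.replicate (n + m) q) = ev φ (List.replicate (n' + m) q) := by
    rw [← hidx n _ ⟨by simp, replicate_mem_orb _⟩, ← hidx n' _ ⟨by simp, replicate_mem_orb _⟩, hφ]
    intro w
    rw [← hN, ← hN, he.1, he.2]
  rw [ev_replicate, ev_replicate] at key
  by_contra h
  have := injective_pow_iff_not_isOfFinOrder.2 h key
  omega

end Classes

end Mealy

/-! ### Return words -/

namespace Mealy

section Return

variable {Q A G : Type*} [Group G] {M : Mealy Q A} {φ : Q → G} {q : Q}
  {N : Subgroup G} {m d : ℕ}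

variable (M φ q N m) in
/-- The return words: `w` is a return word if both ends of the orbit word `w ++ q ^ m` carry the
base word `q ^ m` and `w` represents an element of `N`. -/
def Ret : Set (List Q) :=
  {w | w ++ List.replicate m q ∈ M.Orb q ∧
    List.replicate m q <+: w ++ List.replicate m q ∧ ev φ w ∈ N}

theorem orb_of_append_ret {v w : List Q} (h : v ++ w ++ List.replicate m q ∈ M.Orb q)
    (hw : w ∈ M.Ret φ q N m) : v ++ List.replicate m q ∈ M.Orb q := by
  obtain ⟨-, ⟨t, ht⟩, -⟩ := hw
  rw [List.append_assoc, ← ht, ← List.append_assoc] at h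
  exact (mem_orb_append h).1

theorem replicate_mem_ret (hq : φ q ∈ N) (k : ℕ) : List.replicate k q ∈ M.Ret φ q N m := by
  refine ⟨?_, ?_, ?_⟩
  · rw [← List.replicate_add]; exact replicate_mem_orb _
  · rw [← List.replicate_add, add_comm, List.replicate_add]; exact List.prefix_append _ _
  · rw [ev_replicate]; exact pow_mem hq k

theorem flatten_rotate (x b : List Q) (e : ℕ) :
    x ++ ((List.replicate e (b ++ x)).flatten ++ b) = (List.replicate (e + 1) (x ++ b)).flatten := by
  induction e with
  | zero => simp
  | succ e ih =>
    rw [List.replicate_succ (n := e + 1), List.flatten_cons, ← ih]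
    simp [List.replicate_succ]

/-- Every left extension of the base word extends further to a return word: a letter word leading
from a power of `q` to the given word is fixed by some larger power of `q`, so the state
word it leads to can be repeated indefinitely inside the orbit. -/
theorem exists_append_mem_ret [Finite A] [N.Normal] [N.FiniteIndex] (hinv : M.Invertible)
    {v : List Q} (hv : v ++ List.replicate m q ∈ M.Orb q) : ∃ β, β ++ v ∈ M.Ret φ q N m := by
  set b := List.replicate m q with hb
  obtain ⟨u, hu⟩ := exists_of_mem_orb hv
  obtain ⟨k, hk, hfix⟩ := exists_iterate_eq (actW_injective hinv [q])
    (fun u => M.length_actW [q] u) u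
  have hpow : ∀ j, M.actW (List.replicate (k * j) q) u = u := by
    intro j
    induction j with
    | zero => rfl
    | succ j ih =>
      rw [mul_add, mul_one, List.replicate_add, actW_append_states]
      have : M.actW (List.replicate k q) u = u := by
        rw [iterate_actW] at hfix
        simpa using hfix
      rw [this, ih]
  set n := (v ++ b).length with hn
  let T := k * n
  have hT : n ≤ T := Nat.le_mul_of_pos_left n hk
  obtain ⟨c, hc⟩ : ∃ c, M.stW (List.replicate T q) u = c ++ (v ++ b) := by
    refine ⟨M.stW (List.replicate (T - n) q) (M.actW (List.replicate n q) u), ?_⟩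
    rw [← hu, ← stW_append_states, ← List.replicate_add, Nat.sub_add_cancel hT]
  have hrep : ∀ j, M.stW (List.replicate (T * j) q) u =
      (List.replicate j (c ++ (v ++ b))).flatten := by
    intro j
    induction j with
    | zero => rfl
    | succ j ih =>
      rw [mul_add, mul_one, List.replicate_add, stW_append_states, hpow, ih, hc,
        List.replicate_succ', List.flatten_append]
      simp
  obtain ⟨e, he⟩ := Nat.exists_eq_succ_of_ne_zero (Subgroup.FiniteIndex.index_ne_zero (H := N))
  refine ⟨(List.replicate e (b ++ (c ++ v))).flatten ++ (b ++ c), ?_⟩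
  have h1 : (List.replicate e (b ++ (c ++ v))).flatten ++ (b ++ c) ++ v =
      (List.replicate (e + 1) (b ++ (c ++ v))).flatten := by
    rw [List.replicate_succ', List.flatten_append]
    simp
  rw [h1]
  refine ⟨?_, ?_, ?_⟩
  · have h2 : (List.replicate (e + 1 + 1) (c ++ v ++ b)).flatten ∈ M.Orb q := by
      rw [List.append_assoc, ← hrep]
      exact ⟨_, _, rfl⟩
    rw [← flatten_rotate] at h2
    exact (mem_orb_append h2).2
  · rw [List.replicate_succ, List.flatten_cons, List.append_assoc, List.append_assoc]
    exact List.prefix_append _ _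
  · rw [ev_flatten_replicate, ← Nat.succ_eq_add_one, ← he]
    exact N.pow_index_mem _

variable [Finite Q]

theorem Stable.append_ret (hs : M.Stable q m d) {v w : List Q}
    (hv : v ++ List.replicate m q ∈ M.Orb q) (hw : w ∈ M.Ret φ q N m) :
    v ++ w ++ List.replicate m q ∈ M.Orb q := by
  obtain ⟨h1, ⟨t, ht⟩, -⟩ := hw
  rw [List.append_assoc, ← ht, ← List.append_assoc]
  exact hs.glue (by simp) hv (ht ▸ h1)

theorem Stable.ret_append (hs : M.Stable q m d) {v w : List Q} (hv : v ∈ M.Ret φ q N m)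
    (hw : w ∈ M.Ret φ q N m) : v ++ w ∈ M.Ret φ q N m := by
  refine ⟨hs.append_ret hv.1 hw, ?_, ?_⟩
  · obtain ⟨t, ht⟩ := hv.2.1
    obtain ⟨t', ht'⟩ := hw.2.1
    exact ⟨t ++ t', by rw [← List.append_assoc, ht, List.append_assoc, ht', List.append_assoc]⟩
  · rw [ev_append]; exact mul_mem hv.2.2 hw.2.2

/-- The completion to a return word can be chosen of a fixed length: it only depends on the first
`m` letters of the word and on its class modulo `N`. -/
theorem Stable.exists_uniform_return [Finite A] [N.Normal] [N.FiniteIndex]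
    (hs : M.Stable q m d) (hinv : M.Invertible) (hq : φ q ∈ N) :
    ∃ R, ∀ v, v ++ List.replicate m q ∈ M.Orb q →
      ∃ β, β.length = R ∧ β ++ v ∈ M.Ret φ q N m := by
  set b := List.replicate m q with hb
  let P : List Q × (G ⧸ N) → List Q → Prop := fun t β =>
    ∀ v, v ++ b ∈ M.Orb q → ((v ++ b).take m, ((ev φ v : G) : G ⧸ N)) = t → β ++ v ∈ M.Ret φ q N m
  have hP : ∀ t, ∃ β, P t β := by
    intro t
    by_cases h : ∃ v, v ++ b ∈ M.Orb q ∧ ((v ++ b).take m, ((ev φ v : G) : G ⧸ N)) = t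
    · obtain ⟨v, hv, rfl⟩ := h
      obtain ⟨β, h1, h2, h3⟩ := exists_append_mem_ret (φ := φ) (N := N) hinv hv
      refine ⟨β, fun w hw ht => ?_⟩
      obtain ⟨ht1, ht2⟩ := Prod.mk.inj ht
      have hlen : ((v ++ b).take m).length = m := by simp [hb]
      have ev1 := List.take_append_drop m (v ++ b)
      have ew1 := List.take_append_drop m (w ++ b)
      rw [ht1] at ew1
      rw [← hb, List.append_assoc, ← ev1, ← List.append_assoc] at h1 h2
      refine ⟨?_, ?_, ?_⟩
      · rw [← hb, List.append_assoc, ← ew1, ← List.append_assoc]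
        exact hs.glue hlen.ge (mem_orb_append h1).1 (by rwa [ew1])
      · rw [← hb, List.append_assoc, ← ew1, ← List.append_assoc]
        refine List.IsPrefix.trans ?_ (List.prefix_append _ _)
        refine List.prefix_of_prefix_length_le h2 (List.prefix_append _ _) ?_
        rw [List.length_append, hlen, hb, List.length_replicate]
        omega
      · have h4 : (ev φ v)⁻¹ * ev φ w ∈ N := QuotientGroup.eq.1 ht2.symm
        have h5 := mul_mem h3 h4
        rw [ev_append] at h5 ⊢
        simpa [mul_assoc] using h5
    · exact ⟨[], fun v hv ht => (h ⟨v, hv, ht⟩).elim⟩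
  choose β hβ using hP
  have hfin : (Set.range fun v : List Q =>
      (β ((v ++ b).take m, ((ev φ v : G) : G ⧸ N))).length).Finite := by
    have h1 := ((List.finite_length_eq Q m).prod (Set.finite_univ (α := G ⧸ N))).image
      fun t => (β t).length
    refine h1.subset ?_
    rintro _ ⟨v, rfl⟩
    exact ⟨((v ++ b).take m, ((ev φ v : G) : G ⧸ N)), ⟨by simp [hb], trivial⟩, rfl⟩
  obtain ⟨R, hR⟩ := hfin.bddAbove
  refine ⟨R, fun v hv => ?_⟩
  have hle := hR ⟨v, rfl⟩
  simp only at hle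
  refine ⟨List.replicate (R - (β ((v ++ b).take m, ((ev φ v : G) : G ⧸ N))).length) q ++
    β ((v ++ b).take m, ((ev φ v : G) : G ⧸ N)), ?_, ?_⟩
  · rw [List.length_append, List.length_replicate]; omega
  · rw [List.append_assoc]
    exact hs.ret_append (replicate_mem_ret hq _) (hβ _ v hv rfl)

end Return

end Mealy

/-! ### Torsion of return words and of states -/

/-- Polynomial growth cannot compensate for the loss of one word in every block. -/
theorem false_of_pow_le {C B r D : ℕ} (hD : 1 ≤ D)
    (h : ∀ k : ℕ, D ^ k ≤ (D - 1) ^ k * (C * (B * k + 1) ^ r)) : False := by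
  have hD' : (0 : ℝ) < D := by exact_mod_cast hD
  set ρ : ℝ := ((D - 1 : ℕ) : ℝ) / D with hρ
  have h0 : 0 ≤ ρ := by positivity
  have h1 : ρ < 1 := by
    rw [hρ, div_lt_one hD']
    exact_mod_cast Nat.sub_lt hD one_pos
  have ht := (tendsto_pow_const_mul_const_pow_of_abs_lt_one r
    (by rwa [abs_of_nonneg h0])).const_mul ((C : ℝ) * (B + 1) ^ r)
  rw [mul_zero] at ht
  obtain ⟨k, hk, hk1⟩ :=
    ((ht.eventually_lt_const one_pos).and (Filter.eventually_ge_atTop 1)).exists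
  have hb : (B * k + 1 : ℝ) ≤ (B + 1) * k := by
    have : (1 : ℝ) ≤ k := by exact_mod_cast hk1
    linarith
  have hc : (D : ℝ) ^ k ≤ ((D - 1 : ℕ) : ℝ) ^ k * (C * (B * k + 1) ^ r) := by exact_mod_cast h k
  have e : ((D - 1 : ℕ) : ℝ) ^ k = ρ ^ k * (D : ℝ) ^ k := by
    rw [hρ, div_pow, div_mul_cancel₀ _ (by positivity)]
  have h2 : (D : ℝ) ^ k ≤ D ^ k * (C * (B + 1) ^ r * ((k : ℝ) ^ r * ρ ^ k)) := by
    calc (D : ℝ) ^ k ≤ ρ ^ k * (D : ℝ) ^ k * (C * (B * k + 1) ^ r) := by rw [← e]; exact hc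
      _ ≤ ρ ^ k * (D : ℝ) ^ k * (C * ((B + 1) * k) ^ r) := by gcongr
      _ = _ := by rw [mul_pow]; ring
  have hDk : (0 : ℝ) < (D : ℝ) ^ k := by positivity
  nlinarith

namespace Mealy

section Core

open scoped Classical

variable {Q A G : Type*} [Group G] [Finite Q] {M : Mealy Q A} {φ : Q → G} {q : Q}
  {N : Subgroup G} {m d : ℕ}

/-- The words avoiding the return word `p` are rare: each block of length `B` must omit the
continuation that completes the word to a return word and then appends `p`. -/
theorem Stable.card_avoid (hs : M.Stable q m d) {p : List Q} (hp : p ∈ M.Ret φ q N m) {R : ℕ}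
    (hR : ∀ v, v ++ List.replicate m q ∈ M.Orb q → ∃ β, β.length = R ∧ β ++ v ∈ M.Ret φ q N m)
    {B : ℕ} (hB : B = p.length + R) (k : ℕ) :
    ((M.ext q (List.replicate m q) (B * k)).filter
      fun x => ¬ ∃ w₂ w₁, w₁ ∈ M.Ret φ q N m ∧ x = w₂ ++ (p ++ w₁)).card ≤ (d ^ B - 1) ^ k := by
  set b := List.replicate m q with hb
  have hbO : b ∈ M.Orb q := replicate_mem_orb m
  induction k with
  | zero =>
    refine (Finset.card_filter_le _ _).trans ?_
    rw [hs.card_ext hbO (by simp [hb]), mul_zero, pow_zero, pow_zero]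
  | succ k ih =>
    choose! β hβ1 hβ2 using hR
    set S := (M.ext q b (B * k)).filter
      fun x => ¬ ∃ w₂ w₁, w₁ ∈ M.Ret φ q N m ∧ x = w₂ ++ (p ++ w₁) with hS
    have hmem : ∀ v ∈ S, v ++ b ∈ M.Orb q := fun v hv => (mem_ext.1 (Finset.mem_filter.1 hv).1).2
    have hsub : ((M.ext q b (B * (k + 1))).filter
        fun x => ¬ ∃ w₂ w₁, w₁ ∈ M.Ret φ q N m ∧ x = w₂ ++ (p ++ w₁)) ⊆
        S.biUnion fun v => ((M.ext q (v ++ b) B).erase (p ++ β v)).image (· ++ v) := by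
      intro x hx
      rw [Finset.mem_filter, mem_ext] at hx
      obtain ⟨⟨hxl, hxO⟩, hxa⟩ := hx
      rw [mul_add, mul_one] at hxl
      have hx' := List.take_append_drop B x
      set y := x.take B with hy
      set v := x.drop B with hv
      have hyl : y.length = B := by rw [hy, List.length_take]; omega
      have hvl : v.length = B * k := by rw [hv, List.length_drop]; omega
      rw [← hx', List.append_assoc] at hxO
      have hvO := (mem_orb_append hxO).2
      refine Finset.mem_biUnion.2 ⟨v, ?_, Finset.mem_image.2 ⟨y, ?_, hx'⟩⟩
      · refine Finset.mem_filter.2 ⟨mem_ext.2 ⟨hvl, hvO⟩, ?_⟩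
        rintro ⟨w₂, w₁, hw, e⟩
        exact hxa ⟨y ++ w₂, w₁, hw, by rw [← hx', e, List.append_assoc]⟩
      · refine Finset.mem_erase.2 ⟨?_, mem_ext.2 ⟨hyl, hxO⟩⟩
        intro e
        exact hxa ⟨[], β v ++ v, hβ2 v hvO, by rw [← hx', e]; simp⟩
    refine (Finset.card_le_card hsub).trans (Finset.card_biUnion_le.trans ?_)
    refine (Finset.sum_le_card_nsmul S _ (d ^ B - 1) fun v hv => ?_).trans ?_
    · refine Finset.card_image_le.trans ?_
      have hvO := hmem v hv
      have hin : p ++ β v ∈ M.ext q (v ++ b) B := by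
        refine mem_ext.2 ⟨by rw [List.length_append, hβ1 v hvO, hB], ?_⟩
        have := (hs.ret_append hp (hβ2 v hvO)).1
        simpa using this
      rw [Finset.card_erase_of_mem hin, hs.card_ext hvO (by simp [hb])]
    · rw [smul_eq_mul, pow_succ]
      exact Nat.mul_le_mul_right _ ih

theorem card_image_ext_le_ball [Fintype Q] (r : List Q) (n : ℕ) :
    ((M.ext q r n).image (ev φ)).card ≤ (ball (Finset.univ.image φ) n).ncard := by
  rw [← Set.ncard_coe_finset]
  refine Set.ncard_le_ncard ?_ (finite_ball _ _)
  intro z hz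
  obtain ⟨x, hx, rfl⟩ := Finset.mem_image.1 (Finset.mem_coe.1 hz)
  refine ⟨x.map φ, by rw [List.length_map, (mem_ext.1 hx).1], ?_, rfl⟩
  intro y hy
  obtain ⟨a, -, rfl⟩ := List.mem_map.1 hy
  exact Finset.mem_image_of_mem _ (Finset.mem_univ _)

variable [Finite A] [N.Normal] [N.FiniteIndex] [Group.IsNilpotent N] [Group.FG N]

/-- A return word `Y` differs from the power of `q` of the same length by a torsion element `g`.
Otherwise the cone of `g` orders the words representing elements of `N`, replacing an occurrence of
`p = q ^ |Y|` by `Y` increases a word, and so the class of a maximal word avoids `p`. Such a class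
is too small: there are only polynomially many classes, all of the same size. -/
theorem Stable.isOfFinOrder_of_ret (hs : M.Stable q m d) (hinv : M.Invertible)
    (hrev : M.Reversible) (hφ : M.Realizes φ) (hq : φ q ∈ N) {Y : List Q}
    (hY : Y ∈ M.Ret φ q N m) : IsOfFinOrder (ev φ Y * (φ q ^ Y.length)⁻¹) := by
  have := Fintype.ofFinite Q
  by_contra hinf
  have hgN : ev φ Y * (φ q ^ Y.length)⁻¹ ∈ N := mul_mem hY.2.2 (inv_mem (pow_mem hq _))
  set g : N := ⟨_, hgN⟩ with hg
  have hg' : ¬ IsOfFinOrder g := fun h => hinf (N.subtype.isOfFinOrder h)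
  set b := List.replicate m q with hb
  have hbO : b ∈ M.Orb q := replicate_mem_orb m
  set p := List.replicate Y.length q with hp
  have hpR : p ∈ M.Ret φ q N m := replicate_mem_ret hq _
  obtain ⟨R, hR⟩ := hs.exists_uniform_return (φ := φ) (N := N) hinv hq
  obtain ⟨C, r, hC⟩ := polyGrowth_of_finiteIndex N (Finset.univ.image φ)
  set B := p.length + R with hB
  refine false_of_pow_le (C := C) (B := B) (r := r) (D := d ^ B)
    (Nat.one_le_pow _ _ hs.1) fun k => ?_
  let Ω := {x : List Q // x ∈ M.ext q b (B * k) ∧ ev φ x ∈ N}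
  have hΩfin : Finite Ω := Finite.of_injective
    (fun x : Ω => (⟨x.1, x.2.1⟩ : (M.ext q b (B * k) : Finset (List Q))))
    fun x y h => Subtype.ext (by simpa using h)
  let lt : Ω → Ω → Prop := fun x y => ∃ z ∈ cone g, ev φ x.1 = z * ev φ y.1
  have htr : IsTrans Ω lt := ⟨fun x y w ⟨z, hz, e⟩ ⟨z', hz', e'⟩ =>
    ⟨z * z', mul_mem hz hz', by rw [e, e', Subgroup.coe_mul, mul_assoc]⟩⟩
  have hirr : Std.Irrefl lt := ⟨fun x ⟨z, hz, e⟩ => by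
    have : (z : G) = 1 := by simpa using e
    have h1 : z = 1 := Subtype.ext this
    exact one_notMem_cone hg' (h1 ▸ hz)⟩
  have hqΩ : List.replicate (B * k) q ∈ M.ext q b (B * k) ∧
      ev φ (List.replicate (B * k) q) ∈ N := by
    refine ⟨mem_ext.2 ⟨by simp, ?_⟩, ?_⟩
    · rw [hb, ← List.replicate_add]; exact replicate_mem_orb _
    · rw [ev_replicate]; exact pow_mem hq _
  -- `lt x y` says that `x` is larger in the cone order, so a minimum for it is a maximal word.
  obtain ⟨⟨v, hv, hvN⟩, -, hmax⟩ :=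
    (Finite.wellFounded_of_trans_of_irrefl lt).has_min Set.univ ⟨⟨_, hqΩ⟩, trivial⟩
  have hcls : ((M.ext q b (B * k)).filter fun x => ev φ x = ev φ v) ⊆
      (M.ext q b (B * k)).filter
        fun x => ¬ ∃ w₂ w₁, w₁ ∈ M.Ret φ q N m ∧ x = w₂ ++ (p ++ w₁) := by
    intro x hx
    rw [Finset.mem_filter] at hx ⊢
    refine ⟨hx.1, ?_⟩
    rintro ⟨w₂, w₁, hw, rfl⟩
    obtain ⟨hx1, hx2⟩ := hx
    rw [mem_ext] at hx1
    have hw₂ : w₂ ++ b ∈ M.Orb q := orb_of_append_ret hx1.2 (hs.ret_append hpR hw)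
    have hnew := hs.append_ret hw₂ (hs.ret_append hY hw)
    have hw₂N : ev φ w₂ ∈ N := by
      have h1 : ev φ w₂ * ev φ (p ++ w₁) ∈ N := by rw [← ev_append, hx2]; exact hvN
      exact (N.mul_mem_cancel_right (hs.ret_append hpR hw).2.2).1 h1
    refine hmax ⟨w₂ ++ (Y ++ w₁), mem_ext.2 ⟨?_, hnew⟩, ?_⟩ trivial
      ⟨(⟨_, hw₂N⟩ : N) * g * (⟨_, hw₂N⟩ : N)⁻¹, Subsemigroup.subset_closure ⟨_, rfl⟩, ?_⟩
    · rw [← hx1.1]; simp [hp]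
    · rw [ev_append]; exact mul_mem hw₂N (hs.ret_append hY hw).2.2
    · simp only [← hx2, ev_append, hg, hp, ev_replicate, Subgroup.coe_mul, Subgroup.coe_inv]
      group
  calc (d ^ B) ^ k = (M.ext q b (B * k)).card := by
        rw [hs.card_ext hbO (by simp [hb]), pow_mul]
    _ ≤ _ := card_ext_le hrev hφ hv
    _ ≤ _ := Nat.mul_le_mul ((Finset.card_le_card hcls).trans (hs.card_avoid hpR hR hB k))
        ((card_image_ext_le_ball _ _).trans (hC _))

/-- A state representing an element of a nilpotent normal subgroup of finite index has finite
order: up to finitely many torsion elements and finitely many completions, the orbit words of a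
given length represent a power of `q`. -/
theorem isOfFinOrder_state (hinv : M.Invertible) (hrev : M.Reversible) (hφ : M.Realizes φ)
    (hq : φ q ∈ N) : IsOfFinOrder (φ q) := by
  obtain ⟨m, d, hs⟩ := exists_stable (q := q) hrev
  set b := List.replicate m q with hb
  have hbO : b ∈ M.Orb q := replicate_mem_orb m
  obtain ⟨R, hR⟩ := hs.exists_uniform_return (φ := φ) (N := N) hinv hq
  let WR := (List.finite_length_eq Q R).toFinset
  let Wm := (List.finite_length_eq Q m).toFinset
  let T := (finite_torsion (G := N)).toFinset
  have hext : ∀ n, ((M.ext q b n).image (ev φ)).card ≤ WR.card * T.card := by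
    intro n
    rw [← Finset.card_product]
    refine le_trans (Finset.card_le_card ?_) (Finset.card_image_le
      (f := fun y : List Q × N => (ev φ y.1)⁻¹ * y.2 * φ q ^ (R + n)))
    intro z hz
    obtain ⟨v, hv, rfl⟩ := Finset.mem_image.1 hz
    rw [mem_ext] at hv
    obtain ⟨β, hβ, hret⟩ := hR v hv.2
    have htor := hs.isOfFinOrder_of_ret hinv hrev hφ hq hret
    have hN : ev φ (β ++ v) * (φ q ^ (β ++ v).length)⁻¹ ∈ N :=
      mul_mem hret.2.2 (inv_mem (pow_mem hq _))
    refine Finset.mem_image.2 ⟨(β, ⟨_, hN⟩), Finset.mem_product.2 ⟨?_, ?_⟩, ?_⟩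
    · simpa [WR] using hβ
    · have : IsOfFinOrder (⟨_, hN⟩ : N) := N.subtype_injective.isOfFinOrder_iff.1 htor
      simpa [T] using this
    · simp [ev_append, hβ, hv.1, mul_assoc]
  refine isOfFinOrder_of_bounded hφ (Wm.card * (WR.card * T.card)) m fun n hn => ?_
  obtain ⟨n, rfl⟩ := Nat.exists_eq_add_of_le' hn
  have hcov : ev φ '' {v | v.length = n + m ∧ v ∈ M.Orb q} ⊆
      ((Wm.filter (· ∈ M.Orb q)).biUnion fun r =>
        ((M.ext q r n).image (ev φ)).image (· * ev φ r) : Finset G) := by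
    rintro _ ⟨v, ⟨hvl, hv⟩, rfl⟩
    have e := List.take_append_drop n v
    rw [← e] at hv
    have hdl : (v.drop n).length = m := by rw [List.length_drop]; omega
    have htl : (v.take n).length = n := by rw [List.length_take]; omega
    refine Finset.mem_coe.2 (Finset.mem_biUnion.2 ⟨v.drop n, Finset.mem_filter.2
      ⟨by simpa [Wm] using hdl, (mem_orb_append hv).2⟩, Finset.mem_image.2
        ⟨_, Finset.mem_image_of_mem _ (mem_ext.2 ⟨htl, hv⟩), ?_⟩⟩)
    rw [← ev_append, e]
  refine (Set.ncard_le_ncard hcov (Finset.finite_toSet _)).trans ?_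
  rw [Set.ncard_coe_finset]
  refine Finset.card_biUnion_le.trans
    ((Finset.sum_le_card_nsmul _ _ (WR.card * T.card) fun r hr => ?_).trans ?_)
  · obtain ⟨hr1, hr2⟩ := Finset.mem_filter.1 hr
    have hrl : r.length = m := by simpa [Wm] using hr1
    exact Finset.card_image_le.trans
      ((hs.card_image_ext_le hrev hφ hbO hr2 (by simp [hb]) (by simp [hb, hrl]) n).trans (hext n))
  · rw [smul_eq_mul]
    exact Nat.mul_le_mul_right _ (Finset.card_filter_le _ _)

end Core

end Mealy

/-! ### Power automata and the enriched automaton -/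

namespace Mealy

section Power

variable {Q A G : Type*} [Group G] {M : Mealy Q A} {φ : Q → G}

variable (M) in
/-- The automaton whose states are the words of length `n` in the states of `M`. -/
def power (n : ℕ) : Mealy {l : List Q // l.length = n} A where
  step x a := ((M.actW x [a]).headD a, ⟨M.stW x [a], by rw [length_stW, x.2]⟩)

theorem actW_singleton (s : List Q) (a : A) : M.actW s [a] = [(M.actW s [a]).headD a] := by
  obtain ⟨c, hc⟩ := List.length_eq_one_iff.1 (M.length_actW s [a])
  rw [hc]; rfl

theorem power_actA (n : ℕ) (x : {l : List Q // l.length = n}) (u : List A) :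
    (M.power n).actA x u = M.actW x u := by
  induction u generalizing x with
  | nil => rw [actW_nil]; rfl
  | cons a u ih =>
    have h1 : M.actW x (a :: u) = M.actW x [a] ++ M.actW (M.stW x [a]) u := M.actW_append _ [a] u
    have h2 : (M.power n).actA x (a :: u) = (M.actW x [a]).headD a ::
        (M.power n).actA ⟨M.stW x [a], by rw [length_stW, x.2]⟩ u := rfl
    rw [h1, h2, ih, actW_singleton]
    rfl

theorem power_actW (n : ℕ) (s : List {l : List Q // l.length = n}) (u : List A) :
    (M.power n).actW s u = M.actW (s.map Subtype.val).flatten u := by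
  induction s with
  | nil => rfl
  | cons x s ih => rw [actW, ih, power_actA, List.map_cons, List.flatten_cons, actW_append_states]

theorem power_invertible [Finite A] (hinv : M.Invertible) (n : ℕ) : (M.power n).Invertible := by
  intro x
  refine Finite.injective_iff_bijective.1 fun a b h => ?_
  have h' : (M.actW x [a]).headD a = (M.actW x [b]).headD b := h
  have := actW_injective hinv x.1 (a₁ := [a]) (a₂ := [b])
    (by rw [actW_singleton, actW_singleton _ b, h'])
  simpa using this

theorem power_reversible [Finite Q] (hrev : M.Reversible) (n : ℕ) : (M.power n).Reversible := by
  intro a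
  have : Finite {l : List Q // l.length = n} := (List.finite_length_eq Q n).to_subtype
  exact Finite.injective_iff_bijective.1 fun x y h =>
    Subtype.ext (stW_injective hrev [a] (congrArg Subtype.val h))

theorem Realizes.power (hφ : M.Realizes φ) (n : ℕ) :
    (M.power n).Realizes fun x => ev φ x.1 := by
  have h : ∀ s : List {l : List Q // l.length = n},
      ev (fun x => ev φ x.1) s = ev φ (s.map Subtype.val).flatten := by
    intro s
    induction s with
    | nil => rfl
    | cons x s ih => rw [List.map_cons, List.flatten_cons, ev_append, ← ih]; rfl
  intro s t
  rw [h, h, hφ]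
  simp only [power_actW]

/-- The result for states applies to all positive words, as states of a power automaton. -/
theorem isOfFinOrder_ev [Finite Q] [Finite A] (hinv : M.Invertible) (hrev : M.Reversible)
    (hφ : M.Realizes φ) (N : Subgroup G) [N.Normal] [N.FiniteIndex] [Group.IsNilpotent N]
    [Group.FG N] (s : List Q) : IsOfFinOrder (ev φ s) := by
  let s' := (List.replicate N.index s).flatten
  have hs' : ev φ s' = ev φ s ^ N.index := ev_flatten_replicate _ _
  have : Finite {l : List Q // l.length = s'.length} := (List.finite_length_eq Q _).to_subtype
  have h := isOfFinOrder_state (N := N) (q := (⟨s', rfl⟩ : {l : List Q // l.length = s'.length}))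
    (power_invertible hinv _) (power_reversible hrev _) (hφ.power _)
    (by rw [hs']; exact N.pow_index_mem _)
  rw [hs'] at h
  exact (isOfFinOrder_pow.1 h).resolve_right Subgroup.FiniteIndex.index_ne_zero

end Power

section Enriched

variable {Q A : Type*} [Nonempty A] {M : Mealy Q A}

theorem enriched_actA_inl (q : Q) (u : List A) :
    M.enriched.actA (Sum.inl q) u = M.actA q u := by
  induction u generalizing q with
  | nil => rfl
  | cons a u ih => exact congrArg _ (ih _)

theorem enriched_actW_inl (s : List Q) (u : List A) :
    M.enriched.actW (s.map Sum.inl) u = M.actW s u := by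
  induction s with
  | nil => rfl
  | cons q s ih => rw [List.map_cons, actW, ih, enriched_actA_inl]; rfl

theorem enriched_actA_inr (hinv : M.Invertible) (q : Q) (u : List A) :
    M.enriched.actA (Sum.inr q) (M.actA q u) = u := by
  induction u generalizing q with
  | nil => rfl
  | cons a u ih =>
    have h : Function.invFun (M.o q) (M.o q a) = a := Function.leftInverse_invFun (hinv q).1 a
    change Function.invFun (M.o q) (M.o q a) ::
      M.enriched.actA (Sum.inr (M.t q (Function.invFun (M.o q) (M.o q a)))) _ = _
    rw [h, ih]

end Enriched

end Mealy

/-! ### The automaton group -/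

/-- No infinite virtually nilpotent group is generated by an invertible and
reversible Mealy automaton: if a group `G` is isomorphic (as a monoid) to the automaton group
`P_M̃` of an invertible reversible Mealy automaton and `G` has a nilpotent subgroup of finite
index, then `G` is finite. -/
theorem stmt2 {Q A : Type*} [Fintype Q] [Nonempty Q] [Fintype A] [Nonempty A]
    (M : Mealy Q A) (hinv : M.Invertible) (hrev : M.Reversible)
    {G : Type*} [Group G] (e : (M.enriched).PM ≃* G)
    (H : Subgroup G) (hfi : H.FiniteIndex) (hnil : Group.IsNilpotent H) :
    Finite G := by
  let Ψ : FreeMonoid (Q ⊕ Q) →* G := e.toMonoidHom.comp M.enriched.conQ.mk'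
  have hΨ : ∀ s t, Ψ s = Ψ t ↔ ∀ w, M.enriched.actW s.toList w = M.enriched.actW t.toList w :=
    fun s t => e.injective.eq_iff.trans (Con.eq M.enriched.conQ)
  have hΨs : Function.Surjective Ψ := e.surjective.comp Con.mk'_surjective
  let φ : Q → G := fun q => Ψ (FreeMonoid.of (Sum.inl q))
  have hev : ∀ s : List Q, Mealy.ev φ s = Ψ (FreeMonoid.ofList (s.map Sum.inl)) := by
    intro s
    induction s with
    | nil => exact (map_one Ψ).symm
    | cons q s ih =>
      rw [List.map_cons, FreeMonoid.ofList_cons, map_mul, ← ih]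
      exact List.prod_cons
  have hφ : M.Realizes φ := by
    intro s t
    rw [hev, hev, hΨ]
    simp only [FreeMonoid.toList_ofList, Mealy.enriched_actW_inl]
  have hinr : ∀ q, Ψ (FreeMonoid.of (Sum.inr q)) = (φ q)⁻¹ := by
    intro q
    rw [eq_inv_iff_mul_eq_one, ← map_mul, ← map_one Ψ, hΨ]
    intro w
    change M.enriched.actA (Sum.inr q) (M.enriched.actA (Sum.inl q) w) = w
    rw [Mealy.enriched_actA_inl, Mealy.enriched_actA_inr hinv]
  have hgen : Group.FG G := by
    refine Group.fg_iff.2 ⟨Set.range φ, ?_, Set.finite_range φ⟩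
    rw [eq_top_iff]
    rintro g -
    obtain ⟨w, rfl⟩ := hΨs g
    induction w using FreeMonoid.inductionOn' with
    | one => rw [map_one]; exact one_mem _
    | of_mul x w ih =>
      rw [map_mul]
      refine mul_mem ?_ ih
      cases x with
      | inl q => exact Subgroup.subset_closure ⟨q, rfl⟩
      | inr q => rw [hinr]; exact inv_mem (Subgroup.subset_closure ⟨q, rfl⟩)
  let N := H.normalCore
  have hN : Group.IsNilpotent N := by
    have h : Group.IsNilpotent (H.normalCore.subgroupOf H) := inferInstance
    exact Group.nilpotent_of_mulEquiv (Subgroup.subgroupOfEquivOfLe H.normalCore_le)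
  have htor : ∀ s, IsOfFinOrder (Mealy.ev φ s) := Mealy.isOfFinOrder_ev hinv hrev hφ N
  -- As the generators have finite order, their inverses are positive words as well.
  have hpos : ∀ w, ∃ s, Mealy.ev φ s = Ψ w := by
    intro w
    induction w using FreeMonoid.inductionOn' with
    | one => exact ⟨[], (map_one Ψ).symm⟩
    | of_mul x w ih =>
      obtain ⟨s, hs⟩ := ih
      rw [map_mul, ← hs]
      cases x with
      | inl q => exact ⟨q :: s, List.prod_cons⟩
      | inr q =>
        obtain ⟨k, hk, h⟩ := isOfFinOrder_iff_pow_eq_one.1 (htor [q])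
        obtain ⟨j, rfl⟩ := Nat.exists_eq_succ_of_ne_zero hk.ne'
        have h' : φ q ^ (j + 1) = 1 := by simpa [Mealy.ev] using h
        refine ⟨List.replicate j q ++ s, ?_⟩
        rw [Mealy.ev_append, Mealy.ev_replicate, hinr,
          inv_eq_of_mul_eq_one_left (by rwa [← pow_succ])]
  have hfinN : Finite N := by
    refine Set.finite_univ_iff.1 ((finite_torsion (G := N)).subset fun x _ => ?_)
    obtain ⟨w, hw⟩ := hΨs x
    obtain ⟨s, hs⟩ := hpos w
    refine N.subtype_injective.isOfFinOrder_iff.1 ?_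
    change IsOfFinOrder (x : G)
    rw [← hw, ← hs]
    exact htor s
  exact Finite.of_subgroup_quotient N

end AutGrp
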